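/- arXiv:2402.09647 — 2 statements merged into one kernel-verified Lean document; each statement's English description precedes it below -/
import Mathlib

section
/- The following two assertions hold: (a) for every ε > 0 there exists a positive integer N such that for all positive integers m, m̃, if ν(m, m̃, N) holds then ‖α·(m² − m̃²)‖ < ε; (b) for every positive integer N there exists ε > 0 such that for all positive integers m, m̃, if ‖α·(m² − m̃²)‖ < ε then ν(m, m̃, N) holds. -/
/-!
STATEMENT 17: ν(m, m̃, N) characterises smallness of ‖α·(m² − m̃²)‖.
-/

namespace Stmt17

/-- `μ(m, N)`: `g(n + m) = g(n)` for every positive integer `n ≤ N`. -/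
def mu (g : ℤ → ℤ) (m N : ℤ) : Prop :=
  ∀ n : ℤ, 0 < n → n ≤ N → g (n + m) = g n

/-- `λ(m, N)`: there is a positive integer `n` with `μ(n, N)` and `μ(n + m, N)`. -/
def lam (g : ℤ → ℤ) (m N : ℤ) : Prop :=
  ∃ n : ℤ, 0 < n ∧ mu g n N ∧ mu g (n + m) N

/-- `κ(m, N)`. -/
def kap (g : ℤ → ℤ) (m N : ℤ) : Prop :=
  ∃ M : ℤ, 0 < M ∧ ∀ h : ℤ, 0 < h → g h = 1 → lam g h M →
    ∀ L : ℤ, 0 < L → ∃ n : ℤ, 0 < n ∧ lam g n L ∧ mu g n N ∧ g (h + m + n) = 1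

/-- `ν(m, m̃, N)`. -/
def nu (g : ℤ → ℤ) (m mt N : ℤ) : Prop :=
  ∃ L : ℤ, 0 < L ∧ ∀ n : ℤ, 0 < n → lam g n L → kap g (m + n) L → kap g (mt + n) N

/-- `δ(m, m̃)`. -/
def del (g : ℤ → ℤ) (m mt : ℤ) : Prop :=
  ∀ N : ℤ, 0 < N → ∃ L : ℤ, 0 < L ∧ ∀ n : ℤ, 0 < n →
    nu g (m + n) m L → kap g n L → nu g (mt + n) mt N

abbrev T := UnitAddCircle

def qq (a θ : T) (n : ℤ) : T × T := ((n ^ 2) • a, n • θ)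

lemma qq_add (a θ : T) (n m : ℤ) :
    qq a θ (n + m) = qq a θ n + qq a θ m + (n • (m • ((2 : ℤ) • a)), 0) := by
  unfold qq
  ext
  · simp only [Prod.fst_add]; module
  · simp only [Prod.snd_add]; module

lemma sq_add (a : T) (n m : ℤ) :
    ((n + m) ^ 2) • a = (n ^ 2) • a + (m ^ 2) • a + n • (m • ((2 : ℤ) • a)) := by
  module

lemma zsmul_bd (n : ℤ) (hn : 0 < n) (x : T) : ‖n • x‖ ≤ (n : ℝ) * ‖x‖ := by
  have h := norm_zsmul_le n x
  rwa [Int.norm_eq_abs, abs_of_pos (by exact_mod_cast hn)] at h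

/-- The limit set. -/
def Lam (a θ : T) : Set (T × T) :=
  {p | ∀ ε : ℝ, 0 < ε → ∃ n : ℤ, 0 < n ∧ ‖n • ((2 : ℤ) • a)‖ < ε ∧ ‖qq a θ n - p‖ < ε}

lemma Lam_add (a θ : T) {p r : T × T} (hp : p ∈ Lam a θ) (hr : r ∈ Lam a θ) :
    p + r ∈ Lam a θ := by
  intro ε hε
  obtain ⟨n, hn, hn1, hn2⟩ := hp (ε / 3) (by positivity)
  have hnR : (1 : ℝ) ≤ n := by exact_mod_cast hn
  obtain ⟨m, hm, hm1, hm2⟩ := hr (ε / (3 * n)) (by positivity)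
  have hle : ε / (3 * n) ≤ ε / 3 := by
    apply div_le_div_of_nonneg_left hε.le (by norm_num); linarith
  have hcr : ‖n • (m • ((2 : ℤ) • a))‖ < ε / 3 := by
    refine (zsmul_bd n hn _).trans_lt ?_
    calc (n : ℝ) * ‖m • ((2 : ℤ) • a)‖ < n * (ε / (3 * n)) := by gcongr
      _ = ε / 3 := by field_simp
  refine ⟨n + m, by omega, ?_, ?_⟩
  · rw [add_smul]
    refine (norm_add_le _ _).trans_lt ?_
    linarith
  · rw [qq_add]
    have : qq a θ n + qq a θ m + (n • (m • ((2 : ℤ) • a)), (0 : T)) - (p + r)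
        = (qq a θ n - p) + (qq a θ m - r) + (n • (m • ((2 : ℤ) • a)), (0 : T)) := by abel
    rw [this]
    refine (norm_add₃_le).trans_lt ?_
    have : ‖((n • (m • ((2 : ℤ) • a)), (0 : T)) : T × T)‖ < ε / 3 := by
      rw [Prod.norm_mk, norm_zero]; exact max_lt hcr (by positivity)
    linarith

lemma Lam_nsmul (a θ : T) {p : T × T} (hp : p ∈ Lam a θ) (k : ℕ) : (k + 1) • p ∈ Lam a θ := by
  induction k with
  | zero => simpa using hp
  | succ k ih => rw [succ_nsmul]; exact Lam_add a θ ih hp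

lemma Lam_closed (a θ : T) {p : T × T}
    (h : ∀ ε : ℝ, 0 < ε → ∃ r ∈ Lam a θ, ‖r - p‖ < ε) : p ∈ Lam a θ := by
  intro ε hε
  obtain ⟨r, hr, hrp⟩ := h (ε / 2) (by positivity)
  obtain ⟨n, hn, h1, h2⟩ := hr (ε / 2) (by positivity)
  refine ⟨n, hn, by linarith, ?_⟩
  have : qq a θ n - p = (qq a θ n - r) + (r - p) := by abel
  rw [this]
  refine (norm_add_le _ _).trans_lt ?_
  linarith

lemma Lam_neg (a θ : T) {p : T × T} (hp : p ∈ Lam a θ) : -p ∈ Lam a θ := by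
  apply Lam_closed
  intro ε hε
  have h := mapClusterPt_self_zsmul_atTop_nsmul p (-1)
  rw [neg_one_zsmul] at h
  have h2 := (h.frequently (Metric.ball_mem_nhds (-p) hε)).and_eventually
    (Filter.eventually_ge_atTop 1)
  obtain ⟨k, hk, hk1⟩ := h2.exists
  obtain ⟨j, rfl⟩ := Nat.exists_eq_add_of_le' hk1
  exact ⟨_, Lam_nsmul a θ hp j, by simpa [Metric.mem_ball, dist_eq_norm] using hk⟩

lemma rot (b : T) (hb : ∀ n : ℤ, 0 < n → n • b ≠ 0) (x : T) (K : ℤ) (ε : ℝ) (hε : 0 < ε) :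
    ∃ n : ℤ, K < n ∧ 0 < n ∧ ‖n • b - x‖ < ε := by
  have hd : DenseRange (fun n : ℤ => n • b) := by
    rw [AddCircle.denseRange_zsmul_iff]
    rw [addOrderOf_eq_zero_iff, isOfFinAddOrder_iff_nsmul_eq_zero]
    rintro ⟨n, hn, h⟩
    exact hb n (by exact_mod_cast hn) (by simpa using h)
  have h : MapClusterPt x Filter.atTop (fun n : ℤ => n • b) :=
    ((mapClusterPt_atTop_nsmul_tfae x b).out 1 3).2 (by
      have := hd x
      simpa [← SetLike.mem_coe, AddSubgroup.topologicalClosure_coe, AddSubgroup.coe_zmultiples] using this)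
  have h2 := (h.frequently (Metric.ball_mem_nhds x hε)).and_eventually
    (Filter.eventually_gt_atTop (max K 0))
  obtain ⟨k, hk, hk1⟩ := h2.exists
  exact ⟨k, by omega, by omega, by simpa [Metric.mem_ball, dist_eq_norm] using hk⟩

lemma Lam_of_seq (a θ : T) (u : ℕ → ℤ) (hu : ∀ k, 0 < u k) (p : T × T)
    (h1 : Filter.Tendsto (fun k => u k • ((2 : ℤ) • a)) Filter.atTop (nhds 0))
    (h2 : Filter.Tendsto (fun k => qq a θ (u k)) Filter.atTop (nhds p)) : p ∈ Lam a θ := by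
  intro ε hε
  have e1 := h1.eventually (Metric.ball_mem_nhds 0 hε)
  have e2 := h2.eventually (Metric.ball_mem_nhds p hε)
  obtain ⟨k, hk1, hk2⟩ := (e1.and e2).exists
  exact ⟨u k, hu k, by simpa using hk1, by simpa [dist_eq_norm] using hk2⟩

lemma Lam_full (a θ : T) (ha : ∀ n : ℤ, 0 < n → n • ((2 : ℤ) • a) ≠ 0) (s : ℝ) :
    ((s : T), (0 : T)) ∈ Lam a θ := by
  have hex : ∀ k : ℕ, ∃ n m : ℤ, 0 < n ∧ 0 < m ∧ ‖n • ((2 : ℤ) • a)‖ ≤ 1 / ((k : ℝ) + 1) ∧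
      ‖m • ((2 : ℤ) • a)‖ ≤ (|s| + 1) * (1 / ((k : ℝ) + 1)) ∧
      ‖n • (m • ((2 : ℤ) • a)) - (s : T)‖ ≤ 1 / ((k : ℝ) + 1) := by
    intro k
    obtain ⟨n, hkn, hn, hn1⟩ := rot _ ha 0 k (1 / ((k : ℝ) + 1)) (by positivity)
    have hnk : (k : ℝ) + 1 ≤ n := by
      have : (k : ℤ) + 1 ≤ n := hkn
      exact_mod_cast this
    have hnR : (0 : ℝ) < n := by exact_mod_cast hn
    have hn1' : (1 : ℝ) ≤ n := by exact_mod_cast hn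
    obtain ⟨m, -, hm, hm1⟩ := rot _ ha ((s / n : ℝ) : T) 0 (1 / (((k : ℝ) + 1) * n)) (by positivity)
    refine ⟨n, m, hn, hm, by simpa using hn1.le, ?_, ?_⟩
    · have e : m • ((2 : ℤ) • a) = (m • ((2 : ℤ) • a) - ((s / n : ℝ) : T)) + ((s / n : ℝ) : T) := by
        abel
      rw [e]
      refine (norm_add_le _ _).trans ?_
      have h1 : ‖((s / n : ℝ) : T)‖ ≤ |s / n| := by
        rw [UnitAddCircle.norm_eq]
        simpa using round_le (s / n : ℝ) 0
      have h2 : |s / n| ≤ |s| * (1 / ((k : ℝ) + 1)) := by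
        rw [abs_div, abs_of_pos hnR, div_eq_mul_one_div]
        gcongr
      have h3 : 1 / (((k : ℝ) + 1) * n) ≤ 1 / ((k : ℝ) + 1) := by
        apply one_div_le_one_div_of_le (by positivity)
        nlinarith
      nlinarith
    · have e : n • (m • ((2 : ℤ) • a)) - (s : T) =
          n • (m • ((2 : ℤ) • a) - ((s / n : ℝ) : T)) := by
        rw [smul_sub, ← AddCircle.coe_zsmul]
        congr 2
        rw [zsmul_eq_mul]; field_simp
      rw [e]
      refine (zsmul_bd n hn _).trans ?_
      calc (n : ℝ) * _ ≤ n * (1 / (((k : ℝ) + 1) * n)) := by gcongr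
        _ = _ := by field_simp
  choose u v hu hv h1 h2 h3 using hex
  obtain ⟨⟨p, r⟩, φ, hφ, hlim⟩ := CompactSpace.tendsto_subseq
    (fun k => (qq a θ (u k), qq a θ (v k)))
  have ht : Filter.Tendsto (fun k : ℕ => 1 / ((k : ℝ) + 1)) Filter.atTop (nhds 0) :=
    tendsto_one_div_add_atTop_nhds_zero_nat
  have t1 : Filter.Tendsto (fun k => u k • ((2 : ℤ) • a)) Filter.atTop (nhds 0) :=
    squeeze_zero_norm h1 ht
  have t2 : Filter.Tendsto (fun k => v k • ((2 : ℤ) • a)) Filter.atTop (nhds 0) :=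
    squeeze_zero_norm h2 (by simpa using ht.const_mul (|s| + 1))
  have t3 : Filter.Tendsto (fun k => u k • (v k • ((2 : ℤ) • a))) Filter.atTop (nhds (s : T)) := by
    rw [tendsto_iff_norm_sub_tendsto_zero]
    exact squeeze_zero (fun _ => norm_nonneg _) h3 ht
  have l1 : Filter.Tendsto (fun k => qq a θ (u (φ k))) Filter.atTop (nhds p) :=
    ((continuous_fst.tendsto _).comp hlim)
  have l2 : Filter.Tendsto (fun k => qq a θ (v (φ k))) Filter.atTop (nhds r) :=
    ((continuous_snd.tendsto _).comp hlim)
  have hp : p ∈ Lam a θ :=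
    Lam_of_seq a θ (fun k => u (φ k)) (fun k => hu _) p (t1.comp hφ.tendsto_atTop) l1
  have hr : r ∈ Lam a θ :=
    Lam_of_seq a θ (fun k => v (φ k)) (fun k => hv _) r (t2.comp hφ.tendsto_atTop) l2
  have hw : p + r + ((s : T), (0 : T)) ∈ Lam a θ := by
    refine Lam_of_seq a θ (fun k => u (φ k) + v (φ k)) (fun k => add_pos (hu _) (hv _)) _ ?_ ?_
    · simp only [add_smul]
      simpa using (t1.comp hφ.tendsto_atTop).add (t2.comp hφ.tendsto_atTop)
    · simp only [qq_add]
      exact (l1.add l2).add ((t3.comp hφ.tendsto_atTop).prodMk_nhds tendsto_const_nhds)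
  have := Lam_add a θ hw (Lam_neg a θ (Lam_add a θ hp hr))
  have e : p + r + ((s : T), (0 : T)) + -(p + r) = ((s : T), (0 : T)) := by abel
  rwa [e] at this

lemma dens0 (a θ : T) (ha : ∀ n : ℤ, 0 < n → n • ((2 : ℤ) • a) ≠ 0) (y : T) (ε : ℝ)
    (hε : 0 < ε) : ∃ n : ℤ, 0 < n ∧ ‖n • ((2 : ℤ) • a)‖ < ε ∧ ‖(n ^ 2) • a - y‖ < ε ∧
      ‖n • θ‖ < ε := by
  obtain ⟨s, rfl⟩ := QuotientAddGroup.mk_surjective y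
  obtain ⟨n, hn, h1, h2⟩ := Lam_full a θ ha s ε hε
  rw [Prod.norm_def, max_lt_iff] at h2
  exact ⟨n, hn, h1, h2.1, by simpa [qq] using h2.2⟩

lemma dens (a : T) (ha : ∀ n : ℤ, 0 < n → n • ((2 : ℤ) • a) ≠ 0) (x y : T) (ε : ℝ)
    (hε : 0 < ε) : ∃ n : ℤ, 0 < n ∧ ‖n • ((2 : ℤ) • a) - x‖ < ε ∧ ‖(n ^ 2) • a - y‖ < ε := by
  obtain ⟨n, -, hn, hn1⟩ := rot _ ha x 0 (ε / 2) (by positivity)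
  have hnR : (1 : ℝ) ≤ n := by exact_mod_cast hn
  obtain ⟨m, hm, h1, h2, -⟩ := dens0 a 0 ha (y - (n ^ 2) • a) (ε / (2 * n)) (by positivity)
  have hle : ε / (2 * n) ≤ ε / 2 := by
    apply div_le_div_of_nonneg_left hε.le (by norm_num); linarith
  obtain ⟨m, hm, h1, h2, -⟩ := dens0 a 0 ha (y - (n ^ 2) • a) (ε / (2 * n)) (by positivity)
  have hcr : ‖n • (m • ((2 : ℤ) • a))‖ < ε / 2 := by
    refine (zsmul_bd n hn _).trans_lt ?_
    calc (n : ℝ) * ‖m • ((2 : ℤ) • a)‖ < n * (ε / (2 * n)) := by gcongr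
      _ = ε / 2 := by field_simp
  refine ⟨n + m, by omega, ?_, ?_⟩
  · have e : (n + m) • ((2 : ℤ) • a) - x = (n • ((2 : ℤ) • a) - x) + m • ((2 : ℤ) • a) := by
      module
    rw [e]
    refine (norm_add_le _ _).trans_lt ?_
    linarith
  · have e : ((n + m) ^ 2) • a - y = ((m ^ 2) • a - (y - (n ^ 2) • a)) +
      n • (m • ((2 : ℤ) • a)) := by
      module
    rw [e]
    refine (norm_add_le _ _).trans_lt ?_
    linarith

lemma corner (ρ δ : ℝ) (hδ : 4 * ρ + 2 * δ < 1) (hρ : 0 < ρ) (x : T)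
    (h1 : ‖x + (ρ : T)‖ < ρ + δ) (h2 : ‖x - (ρ : T)‖ < ρ + δ) : ‖x‖ < δ := by
  obtain ⟨x, rfl⟩ := QuotientAddGroup.mk_surjective x
  change ‖((x + ρ : ℝ) : T)‖ < _ at h1
  change ‖((x - ρ : ℝ) : T)‖ < _ at h2
  change ‖(x : T)‖ < _
  rw [UnitAddCircle.norm_eq] at *
  generalize round (x + ρ) = k at h1
  generalize round (x - ρ) = l at h2
  rw [abs_lt] at h1 h2
  have hkl : k = l := by
    have a1 : ((k - l : ℤ) : ℝ) < 1 := by push_cast; linarith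
    have a2 : (-1 : ℝ) < ((k - l : ℤ) : ℝ) := by push_cast; linarith
    have a1' : k - l < 1 := by exact_mod_cast a1
    have a2' : -1 < k - l := by exact_mod_cast a2
    omega
  subst hkl
  refine (round_le x k).trans_lt ?_
  rw [abs_lt]
  constructor <;> linarith

structure Hyp (g : ℤ → ℤ) (a : T) (ρ : ℝ) : Prop where
  pos : 0 < ρ
  lt : ρ < 1 / 4
  irr : ∀ n : ℤ, 0 < n → n • ((2 : ℤ) • a) ≠ 0
  one : ∀ n : ℤ, g n = 1 ↔ ‖(n ^ 2) • a‖ < ρ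
  zero : ∀ n : ℤ, g n = 1 ∨ g n = 0
  ne : ∀ n : ℤ, 0 < n → ‖(n ^ 2) • a‖ ≠ ρ

lemma coe_norm_le (x : ℝ) : ‖(x : T)‖ ≤ |x| := by
  rw [UnitAddCircle.norm_eq]
  simpa using round_le x 0

lemma mu_of_small {g a ρ} (H : Hyp g a ρ) (N : ℤ) (hN : 0 < N) :
    ∃ ε : ℝ, 0 < ε ∧ ∀ m : ℤ, ‖m • ((2 : ℤ) • a)‖ < ε → ‖(m ^ 2) • a‖ < ε → mu g m N := by
  have h : ∀ᶠ ε : ℝ in nhdsWithin 0 (Set.Ioi 0), ∀ n ∈ Finset.Icc 1 N,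
      ((N : ℝ) + 1) * ε < |‖(n ^ 2) • a‖ - ρ| := by
    rw [Filter.eventually_all_finset]
    intro n hn
    have hn' : 0 < n := by rw [Finset.mem_Icc] at hn; omega
    have h0 : 0 < |‖(n ^ 2) • a‖ - ρ| := abs_pos.2 (sub_ne_zero.2 (H.ne n hn'))
    apply Filter.Eventually.filter_mono nhdsWithin_le_nhds
    have hc : ContinuousAt (fun ε : ℝ => ((N : ℝ) + 1) * ε) 0 := by fun_prop
    exact hc.eventually_lt continuousAt_const (by simpa using h0)
  obtain ⟨ε, h1, h2⟩ := (h.and self_mem_nhdsWithin).exists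
  have hε : 0 < ε := h2
  refine ⟨ε, hε, fun m hm1 hm2 n hn hnN => ?_⟩
  have h3 := h1 n (Finset.mem_Icc.2 ⟨by omega, hnN⟩)
  have hnR : (n : ℝ) ≤ N := by exact_mod_cast hnN
  have hn0 : (0 : ℝ) < n := by exact_mod_cast hn
  have hd : ‖((n + m) ^ 2) • a - (n ^ 2) • a‖ < ((N : ℝ) + 1) * ε := by
    have e : ((n + m) ^ 2) • a - (n ^ 2) • a = (m ^ 2) • a + n • (m • ((2 : ℤ) • a)) := by module
    rw [e]
    refine (norm_add_le _ _).trans_lt ?_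
    have := zsmul_bd n hn (m • ((2 : ℤ) • a))
    have : (n : ℝ) * ‖m • ((2 : ℤ) • a)‖ ≤ N * ε := by gcongr
    linarith
  have hd2 := (abs_norm_sub_norm_le (((n + m) ^ 2) • a) ((n ^ 2) • a)).trans_lt (hd.trans h3)
  have hiff : g (n + m) = 1 ↔ g n = 1 := by
    rw [H.one, H.one]
    rcases lt_or_ge ‖(n ^ 2) • a‖ ρ with hlt | hge
    · rw [abs_of_neg (by linarith : ‖(n ^ 2) • a‖ - ρ < 0), abs_lt] at hd2
      constructor
      · intro _; exact hlt
      · intro _; linarith [hd2.2]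
    · rw [abs_of_nonneg (by linarith : 0 ≤ ‖(n ^ 2) • a‖ - ρ), abs_lt] at hd2
      constructor
      · intro h; linarith [hd2.1]
      · intro h; linarith
  rcases H.zero (n + m) with h | h <;> rcases H.zero n with h' | h' <;> simp [h, h'] at hiff ⊢

lemma rigid {g a ρ} (H : Hyp g a ρ) (θ φ : T)
    (hs : ∀ n : ℤ, 0 < n → ‖(n ^ 2) • a‖ < ρ → ‖(n ^ 2) • a + n • θ + φ‖ ≤ ρ)
    (j : ℤ) (hj0 : 0 ≤ j) (hj1 : j ≤ 1) : j • θ + φ = 0 := by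
  have hj : ∀ x : T, ‖j • x‖ ≤ ‖x‖ := by
    intro x
    have : j = 0 ∨ j = 1 := by omega
    rcases this with rfl | rfl <;> simp
  have key : ∀ y : T, ∀ η : ℝ, 0 < η → ‖y‖ ≤ ρ - η → ‖(j • θ + φ) + y‖ < ρ + η := by
    intro y η hη hy
    obtain ⟨k, hk, k1, k2, k3⟩ := dens0 a θ H.irr (y - (j ^ 2) • a) (η / 4) (by positivity)
    have e1 : ((j + k) ^ 2) • a = y + (((k ^ 2) • a - (y - (j ^ 2) • a)) +
      j • (k • ((2 : ℤ) • a))) := by module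
    have hc := hj (k • ((2 : ℤ) • a))
    have hb : ‖((k ^ 2) • a - (y - (j ^ 2) • a)) + j • (k • ((2 : ℤ) • a))‖ < η / 2 := by
      refine (norm_add_le _ _).trans_lt ?_
      linarith
    have h1 := hs (j + k) (by omega) (by
      rw [e1]
      refine (norm_add_le _ _).trans_lt ?_
      linarith)
    rw [e1] at h1
    generalize ((k ^ 2) • a - (y - (j ^ 2) • a)) + j • (k • ((2 : ℤ) • a)) = z at *
    have e2 : (j • θ + φ) + y = (y + z + (j + k) • θ + φ) - z - k • θ := by module
    rw [e2]
    have n1 := norm_sub_le ((y + z + (j + k) • θ + φ) - z) (k • θ)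
    have n2 := norm_sub_le (y + z + (j + k) • θ + φ) z
    linarith
  by_contra hne
  have hpos : 0 < ‖j • θ + φ‖ := norm_pos_iff.2 hne
  obtain ⟨δ, hδ0, hδ1, hδ2, hδ3⟩ : ∃ δ : ℝ, 0 < δ ∧ 4 * ρ + 2 * δ < 1 ∧ δ < ‖j • θ + φ‖ ∧ δ < ρ := by
    have := H.lt
    obtain ⟨δ, h0, h1⟩ := exists_between (lt_min (lt_min hpos H.pos)
      (by linarith : 0 < (1 - 4 * ρ) / 2))
    rw [lt_min_iff, lt_min_iff] at h1
    exact ⟨δ, h0, by linarith, h1.1.1, h1.1.2⟩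
  have hη : ‖((ρ - δ / 4 : ℝ) : T)‖ ≤ ρ - δ / 4 := by
    refine (coe_norm_le _).trans ?_
    rw [abs_of_pos (by linarith)]
  have hη4 : ‖((δ / 4 : ℝ) : T)‖ ≤ δ / 4 := by
    refine (coe_norm_le _).trans ?_
    rw [abs_of_pos (by linarith)]
  have c := corner ρ δ hδ1 H.pos (j • θ + φ) (by
      have e : (j • θ + φ) + (ρ : T) =
          ((j • θ + φ) + ((ρ - δ / 4 : ℝ) : T)) + ((δ / 4 : ℝ) : T) := by
        have : (ρ : T) = ((ρ - δ / 4 : ℝ) : T) + ((δ / 4 : ℝ) : T) := by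
          rw [← AddCircle.coe_add]; congr 1; ring
        rw [this]; abel
      rw [e]
      refine (norm_add_le _ _).trans_lt ?_
      have := key _ (δ / 4) (by positivity) hη
      linarith) (by
      have e : (j • θ + φ) - (ρ : T) =
          ((j • θ + φ) + -((ρ - δ / 4 : ℝ) : T)) - ((δ / 4 : ℝ) : T) := by
        have : (ρ : T) = ((ρ - δ / 4 : ℝ) : T) + ((δ / 4 : ℝ) : T) := by
          rw [← AddCircle.coe_add]; congr 1; ring
        rw [this]; abel
      rw [e]
      refine (norm_sub_le _ _).trans_lt ?_
      have := key (-((ρ - δ / 4 : ℝ) : T)) (δ / 4) (by positivity) (by rwa [norm_neg])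
      linarith)
  linarith

lemma small_of_mu {g a ρ} (H : Hyp g a ρ) (ε : ℝ) (hε : 0 < ε) :
    ∃ N : ℤ, 0 < N ∧ ∀ m : ℤ, 0 < m → mu g m N →
      ‖m • ((2 : ℤ) • a)‖ < ε ∧ ‖(m ^ 2) • a‖ < ε := by
  by_contra hcon
  push Not at hcon
  have hex : ∀ k : ℕ, ∃ m : ℤ, 0 < m ∧ mu g m (k + 1) ∧
      (‖m • ((2 : ℤ) • a)‖ < ε → ε ≤ ‖(m ^ 2) • a‖) := by
    intro k
    exact hcon (k + 1) (by omega)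
  choose u hu0 hu1 hu2 using hex
  obtain ⟨⟨θ, φ⟩, σ, hσ, hlim⟩ := CompactSpace.tendsto_subseq
    (fun k => (u k • ((2 : ℤ) • a), ((u k) ^ 2) • a))
  have l1 : Filter.Tendsto (fun k => u (σ k) • ((2 : ℤ) • a)) Filter.atTop (nhds θ) :=
    ((continuous_fst.tendsto _).comp hlim)
  have l2 : Filter.Tendsto (fun k => (u (σ k) ^ 2) • a) Filter.atTop (nhds φ) :=
    ((continuous_snd.tendsto _).comp hlim)
  have hs : ∀ n : ℤ, 0 < n → ‖(n ^ 2) • a‖ < ρ → ‖(n ^ 2) • a + n • θ + φ‖ ≤ ρ := by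
    intro n hn hlt
    have l3 : Filter.Tendsto (fun k => ((n + u (σ k)) ^ 2) • a) Filter.atTop
        (nhds ((n ^ 2) • a + n • θ + φ)) := by
      have := ((tendsto_const_nhds (x := (n ^ 2) • a)).add (l1.const_smul n)).add l2
      refine this.congr (fun k => ?_)
      module
    refine le_of_tendsto l3.norm ?_
    filter_upwards [Filter.eventually_ge_atTop n.toNat] with k hk
    have hk2 : n ≤ (σ k : ℤ) + 1 := by
      have := hσ.le_apply (x := k)
      omega
    have := hu1 (σ k) n hn hk2
    rw [(H.one n).2 hlt, H.one] at this
    exact this.le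
  have h0 := rigid H θ φ hs 0 le_rfl (by norm_num)
  have h1 := rigid H θ φ hs 1 (by norm_num) le_rfl
  have hφ : φ = 0 := by simpa using h0
  have hθ : θ = 0 := by simpa [hφ] using h1
  subst hφ hθ
  have e1 := l1.norm.eventually (gt_mem_nhds (by simpa using hε : ‖(0 : T)‖ < ε))
  have e2 := l2.norm.eventually (gt_mem_nhds (by simpa using hε : ‖(0 : T)‖ < ε))
  obtain ⟨k, k1, k2⟩ := (e1.and e2).exists
  exact absurd (hu2 _ k1) (not_le.2 k2)

lemma small_of_lam {g a ρ} (H : Hyp g a ρ) (ε : ℝ) (hε : 0 < ε) :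
    ∃ N : ℤ, 0 < N ∧ ∀ m : ℤ, 0 < m → lam g m N → ‖m • ((2 : ℤ) • a)‖ < ε := by
  obtain ⟨N, hN, h⟩ := small_of_mu H (ε / 2) (by positivity)
  refine ⟨N, hN, fun m hm ⟨n, hn, h1, h2⟩ => ?_⟩
  have a1 := (h n hn h1).1
  have a2 := (h (n + m) (by omega) h2).1
  have e : m • ((2 : ℤ) • a) = (n + m) • ((2 : ℤ) • a) - n • ((2 : ℤ) • a) := by module
  rw [e]
  refine (norm_sub_le _ _).trans_lt ?_
  linarith

lemma large_of_small {g a ρ} (H : Hyp g a ρ) (K : ℤ) :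
    ∃ ε : ℝ, 0 < ε ∧ ∀ m : ℤ, 0 < m → ‖m • ((2 : ℤ) • a)‖ < ε → K < m := by
  have h : ∀ᶠ ε : ℝ in nhdsWithin 0 (Set.Ioi 0), ∀ n ∈ Finset.Icc 1 K,
      ε < ‖n • ((2 : ℤ) • a)‖ := by
    rw [Filter.eventually_all_finset]
    intro n hn
    have hn' : 0 < n := by rw [Finset.mem_Icc] at hn; omega
    apply Filter.Eventually.filter_mono nhdsWithin_le_nhds
    exact gt_mem_nhds (norm_pos_iff.2 (H.irr n hn'))
  obtain ⟨ε, h1, h2⟩ := (h.and self_mem_nhdsWithin).exists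
  refine ⟨ε, h2, fun m hm hlt => ?_⟩
  by_contra hc
  have := h1 m (Finset.mem_Icc.2 ⟨by omega, by omega⟩)
  linarith

lemma lam_of_small {g a ρ} (H : Hyp g a ρ) (N : ℤ) (hN : 0 < N) :
    ∃ ε : ℝ, 0 < ε ∧ ∀ m : ℤ, 0 < m → ‖m • ((2 : ℤ) • a)‖ < ε → lam g m N := by
  obtain ⟨ε, hε, hmu⟩ := mu_of_small H N hN
  obtain ⟨K, hK⟩ := exists_int_gt (4 / ε)
  obtain ⟨ε', hε', hlarge⟩ := large_of_small H K
  refine ⟨min ε' (ε / 4), by positivity, fun m hm hlt => ?_⟩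
  rw [lt_min_iff] at hlt
  have hKm : (K : ℝ) < m := by exact_mod_cast hlarge m hm hlt.1
  have hm1 : (1 : ℝ) ≤ m := by exact_mod_cast hm
  have hm0 : (0 : ℝ) < m := by linarith
  obtain ⟨s, hs⟩ := QuotientAddGroup.mk_surjective ((m ^ 2) • a)
  replace hs : (s : T) = (m ^ 2) • a := hs
  set t : ℝ := s - round s with ht
  have ht1 : |t| ≤ 1 / 2 := abs_sub_round s
  have hts : (t : T) = (m ^ 2) • a := by
    rw [ht, AddCircle.coe_sub, hs]
    have : ((round s : ℝ) : T) = 0 := by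
      rw [AddCircle.coe_eq_zero_iff]; exact ⟨round s, by simp⟩
    rw [this, sub_zero]
  have hx : ‖((-t / m : ℝ) : T)‖ ≤ ε / 8 := by
    refine (coe_norm_le _).trans ?_
    rw [abs_div, abs_neg, abs_of_pos hm0, div_le_iff₀ hm0]
    have : 4 / ε < m := by linarith
    rw [div_lt_iff₀ hε] at this
    linarith
  obtain ⟨n, hn, n1, n2⟩ := dens a H.irr ((-t / m : ℝ) : T) 0 (ε / (4 * m)) (by positivity)
  have hle : ε / (4 * m) ≤ ε / 4 := by
    apply div_le_div_of_nonneg_left hε.le (by norm_num); linarith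
  rw [sub_zero] at n2
  have n3 : ‖n • ((2 : ℤ) • a)‖ < ε / 2 := by
    have e : n • ((2 : ℤ) • a) = (n • ((2 : ℤ) • a) - ((-t / m : ℝ) : T)) + ((-t / m : ℝ) : T) := by
      abel
    rw [e]
    refine (norm_add_le _ _).trans_lt ?_
    linarith
  refine ⟨n, hn, hmu n (by linarith) (by linarith), hmu (n + m) ?_ ?_⟩
  · rw [add_smul]
    refine (norm_add_le _ _).trans_lt ?_
    linarith
  · have e0 : m • ((-t / m : ℝ) : T) = -((m ^ 2) • a) := by
      rw [← hts, ← AddCircle.coe_zsmul, ← AddCircle.coe_neg]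
      congr 1
      rw [zsmul_eq_mul]; field_simp
    have e : ((n + m) ^ 2) • a = (n ^ 2) • a +
        m • (n • ((2 : ℤ) • a) - ((-t / m : ℝ) : T)) := by
      rw [smul_sub, e0]; module
    rw [e]
    refine (norm_add_le _ _).trans_lt ?_
    have := zsmul_bd m hm (n • ((2 : ℤ) • a) - ((-t / m : ℝ) : T))
    have h5 : (m : ℝ) * ‖n • ((2 : ℤ) • a) - ((-t / m : ℝ) : T)‖ ≤ m * (ε / (4 * m)) := by gcongr
    have h6 : m * (ε / (4 * m)) = ε / 4 := by field_simp
    linarith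

lemma mul_small {c e x : ℝ} (hc : 0 < c) (h : x < e / c) : c * x < e := by
  rw [lt_div_iff₀ hc] at h; linarith

lemma kap_of_small {g a ρ} (H : Hyp g a ρ) (N : ℤ) (hN : 0 < N) :
    ∃ ε : ℝ, 0 < ε ∧ ∀ m : ℤ, 0 < m → ‖(m ^ 2) • a‖ < ε → kap g m N := by
  obtain ⟨ε, hε, hmu⟩ := mu_of_small H N hN
  refine ⟨ε / 4, by positivity, fun m hm hms => ?_⟩
  have hm0 : (0 : ℝ) < m := by exact_mod_cast hm
  obtain ⟨M, hM, hlamM⟩ := small_of_lam H (ε / 4 / m) (by positivity)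
  refine ⟨M, hM, fun h hh gh lh L hL => ?_⟩
  rw [H.one] at gh
  have h1 := mul_small hm0 (hlamM h hh lh)
  have h2 := (zsmul_bd m hm (h • ((2 : ℤ) • a))).trans_lt h1
  have hh0 : (0 : ℝ) < h := by exact_mod_cast hh
  obtain ⟨εL, hεL, hlamL⟩ := lam_of_small H L hL
  have hη : 0 < ρ - ‖(h ^ 2) • a‖ := by linarith
  set η := ρ - ‖(h ^ 2) • a‖ with hηd
  have hhm : (0 : ℝ) < ((h + m : ℤ) : ℝ) := by push_cast; positivity
  obtain ⟨n, hn, n1, n2⟩ := dens a H.irr 0 (-((m ^ 2) • a) - m • (h • ((2 : ℤ) • a)))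
    (min (min (ε / 4) εL) (min (η / 2) (η / 2 / ((h + m : ℤ) : ℝ)))) (by positivity)
  rw [sub_zero] at n1
  simp only [lt_min_iff] at n1 n2
  have n3 := (zsmul_bd (h + m) (by omega) (n • ((2 : ℤ) • a))).trans_lt (mul_small hhm n1.2.2)
  refine ⟨n, hn, hlamL n hn n1.1.2, hmu n (by linarith [n1.1.1]) ?_, ?_⟩
  · have e : (n ^ 2) • a = ((n ^ 2) • a - (-((m ^ 2) • a) - m • (h • ((2 : ℤ) • a)))) -
      (m ^ 2) • a - m • (h • ((2 : ℤ) • a)) := by abel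
    rw [e]
    have a1 := norm_sub_le (((n ^ 2) • a - (-((m ^ 2) • a) - m • (h • ((2 : ℤ) • a)))) -
      (m ^ 2) • a) (m • (h • ((2 : ℤ) • a)))
    have a2 := norm_sub_le (((n ^ 2) • a - (-((m ^ 2) • a) - m • (h • ((2 : ℤ) • a))))) ((m ^ 2) • a)
    linarith [n2.1.1]
  · rw [H.one]
    have e : ((h + m + n) ^ 2) • a = (h ^ 2) • a +
        ((n ^ 2) • a - (-((m ^ 2) • a) - m • (h • ((2 : ℤ) • a)))) +
        (h + m) • (n • ((2 : ℤ) • a)) := by module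
    rw [e]
    refine norm_add₃_le.trans_lt ?_
    linarith [n2.2.1]

lemma small_of_kap {g a ρ} (H : Hyp g a ρ) (ε : ℝ) (hε : 0 < ε) :
    ∃ N : ℤ, 0 < N ∧ ∀ m : ℤ, 0 < m → kap g m N → ‖(m ^ 2) • a‖ < ε := by
  obtain ⟨δ, hδ0, hδ1, hδ2, hδ3⟩ : ∃ δ : ℝ, 0 < δ ∧ 4 * ρ + 2 * δ < 1 ∧ δ < ε ∧ δ < ρ := by
    have := H.lt
    obtain ⟨δ, h0, h1⟩ := exists_between (lt_min (lt_min hε H.pos)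
      (by linarith : 0 < (1 - 4 * ρ) / 2))
    rw [lt_min_iff, lt_min_iff] at h1
    exact ⟨δ, h0, by linarith, h1.1.1, h1.1.2⟩
  obtain ⟨N, hN, hmu⟩ := small_of_mu H (δ / 5) (by positivity)
  refine ⟨N, hN, fun m hm ⟨M, hM, hk⟩ => ?_⟩
  have hm0 : (0 : ℝ) < m := by exact_mod_cast hm
  obtain ⟨εM, hεM, hlamM⟩ := lam_of_small H M hM
  -- key estimate for a target `y` inside the arc
  have key : ∀ y : T, ‖y‖ ≤ ρ - δ / 5 → ‖(m ^ 2) • a + y‖ < ρ + 4 * (δ / 5) := by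
    intro y hy
    obtain ⟨h, hh, h1, h2⟩ := dens a H.irr 0 y
      (min εM (min (δ / 5) (δ / 5 / m))) (by positivity)
    rw [sub_zero] at h1
    simp only [lt_min_iff] at h1 h2
    have hh0 : (0 : ℝ) < h := by exact_mod_cast hh
    have hhm : (0 : ℝ) < ((h + m : ℤ) : ℝ) := by push_cast; positivity
    have gh : g h = 1 := by
      rw [H.one]
      have e : (h ^ 2) • a = y + ((h ^ 2) • a - y) := by abel
      rw [e]
      refine (norm_add_le _ _).trans_lt ?_
      linarith [h2.2.1]
    obtain ⟨L, hL, hlamL⟩ := small_of_lam H (δ / 5 / ((h + m : ℤ) : ℝ)) (by positivity)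
    obtain ⟨n, hn, n1, n2, n3⟩ := hk h hh gh (hlamM h hh h1.1) L hL
    rw [H.one] at n3
    have b1 := (zsmul_bd m hm (h • ((2 : ℤ) • a))).trans_lt (mul_small hm0 h1.2.2)
    have b2 := (zsmul_bd (h + m) (by omega) (n • ((2 : ℤ) • a))).trans_lt
      (mul_small hhm (hlamL n hn n1))
    have b3 := (hmu n hn n2).2
    have b4 := h2.2.1
    have e : (m ^ 2) • a + y = ((h + m + n) ^ 2) • a - ((h ^ 2) • a - y) -
        m • (h • ((2 : ℤ) • a)) - (h + m) • (n • ((2 : ℤ) • a)) - (n ^ 2) • a := by module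
    rw [e]
    generalize ((h + m + n) ^ 2) • a = z1 at *
    generalize (h ^ 2) • a - y = z2 at *
    generalize m • (h • ((2 : ℤ) • a)) = z3 at *
    generalize (h + m) • (n • ((2 : ℤ) • a)) = z4 at *
    generalize (n ^ 2) • a = z5 at *
    have c1 := norm_sub_le (z1 - z2 - z3 - z4) z5
    have c2 := norm_sub_le (z1 - z2 - z3) z4
    have c3 := norm_sub_le (z1 - z2) z3
    have c4 := norm_sub_le z1 z2
    linarith
  have hη : ‖((ρ - δ / 5 : ℝ) : T)‖ ≤ ρ - δ / 5 := by
    refine (coe_norm_le _).trans ?_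
    rw [abs_of_pos (by linarith)]
  have hη4 : ‖((δ / 5 : ℝ) : T)‖ ≤ δ / 5 := by
    refine (coe_norm_le _).trans ?_
    rw [abs_of_pos (by linarith)]
  have hρs : (ρ : T) = ((ρ - δ / 5 : ℝ) : T) + ((δ / 5 : ℝ) : T) := by
    rw [← AddCircle.coe_add]; congr 1; ring
  refine (corner ρ δ hδ1 H.pos ((m ^ 2) • a) ?_ ?_).trans hδ2
  · have e : (m ^ 2) • a + (ρ : T) =
        ((m ^ 2) • a + ((ρ - δ / 5 : ℝ) : T)) + ((δ / 5 : ℝ) : T) := by rw [hρs]; abel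
    rw [e]
    refine (norm_add_le _ _).trans_lt ?_
    have := key _ hη
    linarith
  · have e : (m ^ 2) • a - (ρ : T) =
        ((m ^ 2) • a + -((ρ - δ / 5 : ℝ) : T)) - ((δ / 5 : ℝ) : T) := by rw [hρs]; abel
    rw [e]
    refine (norm_sub_le _ _).trans_lt ?_
    have := key (-((ρ - δ / 5 : ℝ) : T)) (by rwa [norm_neg])
    linarith

lemma partA {g a ρ} (H : Hyp g a ρ) (ε : ℝ) (hε : 0 < ε) :
    ∃ N : ℤ, 0 < N ∧ ∀ m mt : ℤ, 0 < m → 0 < mt → nu g m mt N →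
      ‖(m ^ 2 - mt ^ 2) • a‖ < ε := by
  obtain ⟨N, hN, hkap⟩ := small_of_kap H (ε / 4) (by positivity)
  refine ⟨N, hN, fun m mt hm hmt ⟨L, hL, hnu⟩ => ?_⟩
  have hm0 : (0 : ℝ) < m := by exact_mod_cast hm
  have hmt0 : (0 : ℝ) < mt := by exact_mod_cast hmt
  obtain ⟨ε1, hε1, hlam⟩ := lam_of_small H L hL
  obtain ⟨ε2, hε2, hkap2⟩ := kap_of_small H L hL
  obtain ⟨n, hn, n1, n2⟩ := dens a H.irr 0 (-((m ^ 2) • a))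
    (min (min ε1 (ε / 4)) (min (ε2 / 2) (min (ε2 / 2 / m) (ε / 4 / mt)))) (by positivity)
  rw [sub_zero] at n1
  simp only [lt_min_iff] at n1 n2
  have b1 := (zsmul_bd m hm (n • ((2 : ℤ) • a))).trans_lt (mul_small hm0 n1.2.2.1)
  have b2 := (zsmul_bd mt hmt (n • ((2 : ℤ) • a))).trans_lt (mul_small hmt0 n1.2.2.2)
  have hk : kap g (m + n) L := by
    refine hkap2 (m + n) (by omega) ?_
    have e : ((m + n) ^ 2) • a = ((n ^ 2) • a - -((m ^ 2) • a)) + m • (n • ((2 : ℤ) • a)) := by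
      module
    rw [e]
    refine (norm_add_le _ _).trans_lt ?_
    linarith [n2.2.1]
  have b3 := hkap (mt + n) (by omega) (hnu n hn (hlam n hn n1.1.1) hk)
  have b4 := n2.1.2
  have e : (m ^ 2 - mt ^ 2) • a = ((n ^ 2) • a - -((m ^ 2) • a)) +
      mt • (n • ((2 : ℤ) • a)) - ((mt + n) ^ 2) • a := by module
  rw [e]
  refine (norm_sub_le _ _).trans_lt ?_
  have := norm_add_le ((n ^ 2) • a - -((m ^ 2) • a)) (mt • (n • ((2 : ℤ) • a)))
  linarith

lemma partB {g a ρ} (H : Hyp g a ρ) (N : ℤ) (hN : 0 < N) :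
    ∃ ε : ℝ, 0 < ε ∧ ∀ m mt : ℤ, 0 < m → 0 < mt → ‖(m ^ 2 - mt ^ 2) • a‖ < ε →
      nu g m mt N := by
  obtain ⟨ε, hε, hkap⟩ := kap_of_small H N hN
  refine ⟨ε / 4, by positivity, fun m mt hm hmt hlt => ?_⟩
  have hm0 : (0 : ℝ) < m := by exact_mod_cast hm
  have hmt0 : (0 : ℝ) < mt := by exact_mod_cast hmt
  obtain ⟨L1, hL1, hlam⟩ := small_of_lam H (min (ε / 4 / m) (ε / 4 / mt)) (by positivity)
  obtain ⟨L2, hL2, hkap2⟩ := small_of_kap H (ε / 4) (by positivity)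
  have mono : ∀ m N N' : ℤ, N ≤ N' → mu g m N' → mu g m N :=
    fun m N N' h hm n hn hnN => hm n hn (hnN.trans h)
  refine ⟨max L1 L2, by positivity, fun n hn h1 h2 => ?_⟩
  have c1 : lam g n L1 := by
    obtain ⟨k, hk, k1, k2⟩ := h1
    exact ⟨k, hk, mono _ _ _ (le_max_left _ _) k1, mono _ _ _ (le_max_left _ _) k2⟩
  have c2 : kap g (m + n) L2 := by
    obtain ⟨M, hM, hh⟩ := h2
    refine ⟨M, hM, fun h hp gh lh L hL => ?_⟩
    obtain ⟨k, hk, k1, k2, k3⟩ := hh h hp gh lh L hL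
    exact ⟨k, hk, k1, mono _ _ _ (le_max_right _ _) k2, k3⟩
  have d1 := hlam n hn c1
  rw [lt_min_iff] at d1
  have d2 := hkap2 (m + n) (by omega) c2
  have b1 := (zsmul_bd m hm (n • ((2 : ℤ) • a))).trans_lt (mul_small hm0 d1.1)
  have b2 := (zsmul_bd mt hmt (n • ((2 : ℤ) • a))).trans_lt (mul_small hmt0 d1.2)
  refine hkap (mt + n) (by omega) ?_
  have e : ((mt + n) ^ 2) • a = ((m + n) ^ 2) • a - (m ^ 2 - mt ^ 2) • a -
      m • (n • ((2 : ℤ) • a)) + mt • (n • ((2 : ℤ) • a)) := by module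
  rw [e]
  have a1 := norm_add_le (((m + n) ^ 2) • a - (m ^ 2 - mt ^ 2) • a -
      m • (n • ((2 : ℤ) • a))) (mt • (n • ((2 : ℤ) • a)))
  have a2 := norm_sub_le (((m + n) ^ 2) • a - (m ^ 2 - mt ^ 2) • a) (m • (n • ((2 : ℤ) • a)))
  have a3 := norm_sub_le (((m + n) ^ 2) • a) ((m ^ 2 - mt ^ 2) • a)
  linarith

open scoped Classical in
theorem statement (α ρ : ℝ) (hρ0 : 0 < ρ) (hρ4 : ρ < 1 / 4)
    (hα : ¬ ∃ q r : ℚ, α = (q : ℝ) + (r : ℝ) * ρ)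
    (g : ℤ → ℤ)
    (hg : ∀ n : ℤ, g n = if |α * n ^ 2 - round (α * n ^ 2)| < ρ then 1 else 0) :
    (∀ ε : ℝ, 0 < ε → ∃ N : ℤ, 0 < N ∧ ∀ m mt : ℤ, 0 < m → 0 < mt → nu g m mt N →
        |α * ((m : ℝ) ^ 2 - (mt : ℝ) ^ 2) - round (α * ((m : ℝ) ^ 2 - (mt : ℝ) ^ 2))| < ε) ∧
      (∀ N : ℤ, 0 < N → ∃ ε : ℝ, 0 < ε ∧ ∀ m mt : ℤ, 0 < m → 0 < mt →
        |α * ((m : ℝ) ^ 2 - (mt : ℝ) ^ 2) - round (α * ((m : ℝ) ^ 2 - (mt : ℝ) ^ 2))| < ε →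
          nu g m mt N) := by
  have hco : ∀ k : ℤ, k • (α : T) = ((α * k : ℝ) : T) := by
    intro k
    rw [← AddCircle.coe_zsmul, zsmul_eq_mul, mul_comm]
  have hnorm : ∀ n : ℤ, ‖(n ^ 2) • (α : T)‖ = |α * n ^ 2 - round (α * n ^ 2)| := by
    intro n
    rw [hco, UnitAddCircle.norm_eq]; push_cast; rfl
  have hnorm2 : ∀ m mt : ℤ, ‖(m ^ 2 - mt ^ 2) • (α : T)‖ =
      |α * ((m : ℝ) ^ 2 - (mt : ℝ) ^ 2) - round (α * ((m : ℝ) ^ 2 - (mt : ℝ) ^ 2))| := by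
    intro m mt
    rw [hco, UnitAddCircle.norm_eq]; push_cast; rfl
  have H : Hyp g (α : T) ρ := by
    refine ⟨hρ0, hρ4, ?_, ?_, ?_, ?_⟩
    · intro n hn h
      rw [smul_smul, hco, AddCircle.coe_eq_zero_iff] at h
      obtain ⟨k, hk⟩ := h
      apply hα
      have hn0 : (n : ℝ) ≠ 0 := by exact_mod_cast hn.ne'
      refine ⟨(k : ℚ) / (n * 2), 0, ?_⟩
      push_cast
      simp only [zsmul_eq_mul, mul_one] at hk
      push_cast at hk
      rw [hk]; field_simp; ring
    · intro n
      rw [hnorm, hg]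
      split_ifs with h <;> simp [h]
    · intro n
      rw [hg]
      split_ifs <;> simp
    · intro n hn h
      rw [hnorm] at h
      have hn0 : (n : ℝ) ≠ 0 := by exact_mod_cast hn.ne'
      generalize round (α * n ^ 2) = k at h
      apply hα
      rcases abs_eq hρ0.le |>.1 h with h | h
      · refine ⟨(k : ℚ) / n ^ 2, 1 / n ^ 2, ?_⟩
        push_cast
        field_simp; linarith
      · refine ⟨(k : ℚ) / n ^ 2, -1 / n ^ 2, ?_⟩
        push_cast
        field_simp; linarith
  simp only [← hnorm2]
  exact ⟨partA H, partB H⟩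

end Stmt17
end

section
/- For all positive integers m, m̃, the relation δ(m, m̃) holds if and only if m divides m̃. -/
/-!
STATEMENT 18: δ(m, m̃) holds if and only if m divides m̃.
-/

namespace Stmt18

/-- `μ(m, N)`: `g(n + m) = g(n)` for every positive integer `n ≤ N`. -/
def mu (g : ℤ → ℤ) (m N : ℤ) : Prop :=
  ∀ n : ℤ, 0 < n → n ≤ N → g (n + m) = g n

/-- `λ(m, N)`: there is a positive integer `n` with `μ(n, N)` and `μ(n + m, N)`. -/
def lam (g : ℤ → ℤ) (m N : ℤ) : Prop :=
  ∃ n : ℤ, 0 < n ∧ mu g n N ∧ mu g (n + m) N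

/-- `κ(m, N)`. -/
def kap (g : ℤ → ℤ) (m N : ℤ) : Prop :=
  ∃ M : ℤ, 0 < M ∧ ∀ h : ℤ, 0 < h → g h = 1 → lam g h M →
    ∀ L : ℤ, 0 < L → ∃ n : ℤ, 0 < n ∧ lam g n L ∧ mu g n N ∧ g (h + m + n) = 1

/-- `ν(m, m̃, N)`. -/
def nu (g : ℤ → ℤ) (m mt N : ℤ) : Prop :=
  ∃ L : ℤ, 0 < L ∧ ∀ n : ℤ, 0 < n → lam g n L → kap g (m + n) L → kap g (mt + n) N

/-- `δ(m, m̃)`. -/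
def del (g : ℤ → ℤ) (m mt : ℤ) : Prop :=
  ∀ N : ℤ, 0 < N → ∃ L : ℤ, 0 < L ∧ ∀ n : ℤ, 0 < n →
    nu g (m + n) m L → kap g n L → nu g (mt + n) mt N

open Filter Topology

theorem nsm (n : ℤ) (x : UnitAddCircle) : ‖n • x‖ ≤ |(n : ℝ)| * ‖x‖ := by
  have := norm_zsmul_le n x
  rwa [Int.norm_eq_abs] at this

theorem small (C ε : ℝ) (hε : 0 < ε) : ∃ η : ℝ, 0 < η ∧ η ≤ ε ∧ C * η < ε := by
  refine ⟨ε / (|C| + 2), by positivity, ?_, ?_⟩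
  · apply div_le_self hε.le
    linarith [abs_nonneg C]
  · rw [mul_div_assoc', div_lt_iff₀ (by positivity)]
    nlinarith [abs_nonneg C, le_abs_self C]

theorem sq_expand (a : UnitAddCircle) (n m : ℤ) :
    ((n + m) ^ 2) • a = n ^ 2 • a + n • ((2 * m) • a) + m ^ 2 • a := by
  rw [smul_smul, ← add_smul, ← add_smul]; congr 1; ring

theorem rot (a : UnitAddCircle) (ha : ∀ k : ℤ, k ≠ 0 → k • a ≠ 0) (x : UnitAddCircle) (ε : ℝ)
    (hε : 0 < ε) : ∃ k : ℤ, 0 < k ∧ ‖(2 * k) • a - x‖ < ε := by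
  have h1 : DenseRange (fun n : ℤ => n • ((2 : ℤ) • a)) := by
    rw [AddCircle.denseRange_zsmul_iff, addOrderOf_eq_zero_iff, isOfFinAddOrder_iff_zsmul_eq_zero]
    rintro ⟨n, hn, h⟩
    rw [smul_smul] at h
    exact ha _ (by simpa using hn) h
  have h2 : MapClusterPt x atTop (fun n : ℕ => n • ((2 : ℤ) • a)) :=
    ((mapClusterPt_atTop_nsmul_tfae x ((2 : ℤ) • a)).out 3 0).1 (h1 x)
  have h3 := (mapClusterPt_iff_frequently.1 h2) _ (Metric.ball_mem_nhds x hε)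
  obtain ⟨n, hn, hb⟩ := (frequently_atTop.1 h3) 1
  refine ⟨n, by exact_mod_cast hn, ?_⟩
  rw [Metric.mem_ball, dist_eq_norm] at hb
  have e : (2 * (n : ℤ)) • a = n • ((2 : ℤ) • a) := by rw [mul_comm, mul_smul, natCast_zsmul]
  rw [e]
  exact hb

/-- small `2ka` forces large `k` -/
theorem large (a : UnitAddCircle) (ha : ∀ k : ℤ, k ≠ 0 → k • a ≠ 0) (K : ℕ) :
    ∃ ε : ℝ, 0 < ε ∧ ∀ k : ℤ, 0 < k → ‖(2 * k) • a‖ < ε → (K : ℤ) < k := by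
  induction K with
  | zero => exact ⟨1, one_pos, fun k hk _ => by simpa using hk⟩
  | succ K ih =>
    obtain ⟨ε, hε, h⟩ := ih
    have h0 : 0 < ‖(2 * ((K : ℤ) + 1)) • a‖ := norm_pos_iff.2 (ha _ (by omega))
    refine ⟨min ε ‖(2 * ((K : ℤ) + 1)) • a‖, lt_min hε h0, fun k hk hlt => ?_⟩
    have h1 := h k hk (hlt.trans_le (min_le_left _ _))
    have h2 : k ≠ K + 1 := by
      rintro rfl
      exact absurd hlt (not_lt.2 (min_le_right _ _))
    push_cast
    omega

/-- limit set -/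
def W (a b : UnitAddCircle) : Set (UnitAddCircle × UnitAddCircle) :=
  {p | ∀ ε : ℝ, 0 < ε → ∃ k : ℤ, 0 < k ∧ ‖(2 * k) • a‖ < ε ∧ ‖k ^ 2 • a - p.1‖ < ε ∧
    ‖k • b - p.2‖ < ε}

theorem W_closed (a b : UnitAddCircle) : IsClosed (W a b) := by
  rw [← closure_subset_iff_isClosed]
  intro p hp ε hε
  obtain ⟨q, hq, hd⟩ := Metric.mem_closure_iff.1 hp (ε / 2) (by linarith)
  obtain ⟨k, hk, h1, h2, h3⟩ := hq (ε / 2) (by linarith)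
  rw [Prod.dist_eq, max_lt_iff, dist_comm, dist_eq_norm, dist_comm, dist_eq_norm] at hd
  refine ⟨k, hk, by linarith, ?_, ?_⟩
  · have := norm_add_le (k ^ 2 • a - q.1) (q.1 - p.1)
    rw [sub_add_sub_cancel] at this
    linarith [hd.1]
  · have := norm_add_le (k • b - q.2) (q.2 - p.2)
    rw [sub_add_sub_cancel] at this
    linarith [hd.2]

theorem W_add (a b : UnitAddCircle) {p q} (hp : p ∈ W a b) (hq : q ∈ W a b) : p + q ∈ W a b := by
  intro ε hε
  obtain ⟨k, hk, h1, h2, h3⟩ := hp (ε / 4) (by linarith)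
  obtain ⟨η, hη, hη1, hη2⟩ := small |(k : ℝ)| (ε / 4) (by linarith)
  obtain ⟨l, hl, l1, l2, l3⟩ := hq η hη
  refine ⟨k + l, by omega, ?_, ?_, ?_⟩
  · have := norm_add_le ((2 * k) • a) ((2 * l) • a)
    rw [← add_smul, ← mul_add] at this
    linarith
  · have e : (k + l) ^ 2 • a - (p + q).1 =
        (k ^ 2 • a - p.1) + k • ((2 * l) • a) + (l ^ 2 • a - q.1) := by
      rw [sq_expand, Prod.fst_add]; abel
    rw [e]
    have t1 := norm_add₃_le (a := k ^ 2 • a - p.1) (b := k • ((2 * l) • a)) (c := l ^ 2 • a - q.1)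
    have t2 := nsm k ((2 * l) • a)
    have t3 := mul_le_mul_of_nonneg_left l1.le (abs_nonneg (k : ℝ))
    linarith
  · have e : (k + l) • b - (p + q).2 = (k • b - p.2) + (l • b - q.2) := by
      rw [add_smul, Prod.snd_add]; abel
    rw [e]
    have := norm_add_le (k • b - p.2) (l • b - q.2)
    linarith

theorem W_neg (a b : UnitAddCircle) {p} (hp : p ∈ W a b) : -p ∈ W a b := by
  have hmul : ∀ n : ℕ, (n + 1) • p ∈ W a b := by
    intro n
    induction n with
    | zero => simpa using hp
    | succ n ih => rw [succ_nsmul]; exact W_add a b ih hp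
  have h := mapClusterPt_self_zsmul_atTop_nsmul p (-1)
  rw [neg_one_zsmul] at h
  rw [← (W_closed a b).closure_eq, mem_closure_iff_nhds]
  intro t ht
  obtain ⟨n, hn, hb⟩ := (frequently_atTop.1 ((mapClusterPt_iff_frequently.1 h) t ht)) 1
  obtain ⟨n, rfl⟩ := Nat.exists_eq_add_of_le' hn
  exact ⟨_, hb, hmul n⟩

theorem W_of_lim (a b : UnitAddCircle) (u : ℕ → ℤ) (hu : ∀ n, 0 < u n) (F : Filter ℕ) [F.NeBot]
    (h0 : Tendsto (fun n => (2 * u n) • a) F (𝓝 0)) (p)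
    (h1 : Tendsto (fun n => (u n ^ 2 • a, u n • b)) F (𝓝 p)) : p ∈ W a b := by
  intro ε hε
  have e0 := (Metric.tendsto_nhds.1 h0) ε hε
  have e1 := (Metric.tendsto_nhds.1 h1) ε hε
  obtain ⟨n, n0, n1⟩ := (e0.and e1).exists
  rw [Prod.dist_eq, max_lt_iff, dist_eq_norm, dist_eq_norm] at n1
  rw [dist_zero_right] at n0
  exact ⟨u n, hu n, n0, n1.1, n1.2⟩

theorem tz {u : ℕ → UnitAddCircle} (x : UnitAddCircle)
    (h : ∀ n, ‖u n - x‖ ≤ 2 / ((n : ℝ) + 1)) : Tendsto u atTop (𝓝 x) := by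
  rw [tendsto_iff_norm_sub_tendsto_zero]
  refine squeeze_zero (fun n => norm_nonneg _) h ?_
  have := (tendsto_one_div_add_atTop_nhds_zero_nat (𝕜 := ℝ)).const_mul 2
  simpa [div_eq_mul_inv] using this

theorem ncoe (r : ℝ) : ‖(r : UnitAddCircle)‖ ≤ |r| := by
  rw [UnitAddCircle.norm_eq]
  simpa using round_le r 0

theorem W_all (a b : UnitAddCircle) (ha : ∀ k : ℤ, k ≠ 0 → k • a ≠ 0) (x : UnitAddCircle) :
    (x, (0 : UnitAddCircle)) ∈ W a b := by
  obtain ⟨r, hr⟩ : ∃ r : ℝ, (r : UnitAddCircle) = x := QuotientAddGroup.mk_surjective x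
  have hk : ∀ n : ℕ, ∃ k : ℤ, 0 < k ∧ ‖(2 * k) • a - 0‖ ≤ 2 / ((n : ℝ) + 1) ∧
      |r| * (n + 1) ≤ k := by
    intro n
    obtain ⟨K, hK⟩ := exists_nat_ge (|r| * (n + 1))
    obtain ⟨ε, hε, h⟩ := large a ha K
    obtain ⟨k, hk, h2⟩ := rot a ha 0 (min ε (2 / ((n : ℝ) + 1))) (by positivity)
    refine ⟨k, hk, (h2.trans_le (min_le_right _ _)).le, hK.trans ?_⟩
    rw [sub_zero] at h2
    exact_mod_cast (h k hk (h2.trans_le (min_le_left _ _))).le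
  choose k k0 k1 k2 using hk
  have hl : ∀ n : ℕ, ∃ l : ℤ, 0 < l ∧
      ‖(2 * l) • a - ((r / k n : ℝ) : UnitAddCircle)‖ < 1 / (((n : ℝ) + 1) * k n) := by
    intro n
    have : (0 : ℝ) < k n := by exact_mod_cast k0 n
    exact rot a ha _ _ (by positivity)
  choose l l0 l1 using hl
  have hkl : Tendsto (fun n => k n • ((2 * l n) • a)) atTop (𝓝 x) := by
    apply tz
    intro n
    have hp : (0 : ℝ) < k n := by exact_mod_cast k0 n
    have e : k n • ((2 * l n) • a) - x
        = k n • ((2 * l n) • a - ((r / k n : ℝ) : UnitAddCircle)) := by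
      rw [smul_sub, ← AddCircle.coe_zsmul, zsmul_eq_mul, mul_div_cancel₀ _ hp.ne', hr]
    rw [e]
    refine (nsm _ _).trans ?_
    rw [abs_of_pos hp]
    have := mul_le_mul_of_nonneg_left (l1 n).le hp.le
    refine this.trans ?_
    rw [mul_one_div, mul_comm ((n : ℝ) + 1), ← div_div, div_self hp.ne']
    gcongr
    norm_num
  have hk0 : Tendsto (fun n => (2 * k n) • a) atTop (𝓝 0) := tz 0 k1
  have hl0 : Tendsto (fun n => (2 * l n) • a) atTop (𝓝 0) := by
    apply tz
    intro n
    have hp : (1 : ℝ) ≤ k n := by exact_mod_cast k0 n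
    have hp' : (0 : ℝ) < k n := by linarith
    rw [sub_zero]
    have t := norm_add_le ((2 * l n) • a - ((r / k n : ℝ) : UnitAddCircle)) ((r / k n : ℝ))
    rw [sub_add_cancel] at t
    have t2 : 1 / (((n : ℝ) + 1) * k n) ≤ 1 / ((n : ℝ) + 1) := by
      apply one_div_le_one_div_of_le (by positivity)
      nlinarith [(Nat.cast_nonneg n : (0 : ℝ) ≤ n)]
    have t3 : |r / k n| ≤ 1 / ((n : ℝ) + 1) := by
      rw [abs_div, abs_of_pos hp', div_le_div_iff₀ hp' (by positivity)]
      linarith [k2 n]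
    have t4 := ncoe (r / k n)
    have t5 : 2 / ((n : ℝ) + 1) = 1 / ((n : ℝ) + 1) + 1 / ((n : ℝ) + 1) := by ring
    linarith [l1 n]
  let F : Ultrafilter ℕ := Filter.hyperfilter ℕ
  have hF : (F : Filter ℕ) ≤ atTop := Nat.hyperfilter_le_atTop
  obtain ⟨p, -, hp⟩ := isCompact_univ.ultrafilter_le_nhds (F.map (fun n => (k n ^ 2 • a, k n • b)))
    (by simp)
  obtain ⟨q, -, hq⟩ := isCompact_univ.ultrafilter_le_nhds (F.map (fun n => (l n ^ 2 • a, l n • b)))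
    (by simp)
  have hp' : Tendsto (fun n => (k n ^ 2 • a, k n • b)) F (𝓝 p) := hp
  have hq' : Tendsto (fun n => (l n ^ 2 • a, l n • b)) F (𝓝 q) := hq
  have hpW := W_of_lim a b k k0 F (hk0.mono_left hF) p hp'
  have hqW := W_of_lim a b l l0 F (hl0.mono_left hF) q hq'
  have hsW : p + (x, 0) + q ∈ W a b := by
    refine W_of_lim a b (fun n => k n + l n) (fun n => add_pos (k0 n) (l0 n)) F ?_ _ ?_
    · have := (hk0.add hl0).mono_left hF
      simpa [mul_add, add_smul] using this
    · have h1 : Tendsto (fun n => (k n • ((2 * l n) • a), (0 : UnitAddCircle))) F (𝓝 (x, 0)) :=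
        (hkl.mono_left hF).prodMk_nhds tendsto_const_nhds
      have h2 := (hp'.add h1).add hq'
      refine h2.congr (fun n => ?_)
      ext1
      · simp only [sq_expand, Prod.fst_add]
      · simp [add_smul]
  have := W_add a b (W_add a b hsW (W_neg a b hpW)) (W_neg a b hqW)
  have e : p + (x, 0) + q + -p + -q = (x, (0 : UnitAddCircle)) := by abel
  rwa [e] at this

theorem dens (a : UnitAddCircle) (ha : ∀ k : ℤ, k ≠ 0 → k • a ≠ 0) (x y : UnitAddCircle) (ε : ℝ)
    (hε : 0 < ε) : ∃ n : ℤ, 0 < n ∧ ‖(2 * n) • a - x‖ < ε ∧ ‖n ^ 2 • a - y‖ < ε := by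
  obtain ⟨k, hk, h1⟩ := rot a ha x (ε / 2) (by linarith)
  obtain ⟨η, hη, hη1, hη2⟩ := small |(k : ℝ)| (ε / 2) (by linarith)
  obtain ⟨l, hl, l1, l2, -⟩ := W_all a 0 ha (y - k ^ 2 • a) η hη
  refine ⟨k + l, by omega, ?_, ?_⟩
  · have e : (2 * (k + l)) • a - x = ((2 * k) • a - x) + (2 * l) • a := by
      rw [mul_add, add_smul]; abel
    rw [e]
    have := norm_add_le ((2 * k) • a - x) ((2 * l) • a)
    linarith
  · have e : (k + l) ^ 2 • a - y = k • ((2 * l) • a) + (l ^ 2 • a - (y - k ^ 2 • a)) := by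
      rw [sq_expand]; abel
    rw [e]
    have t1 := norm_add_le (k • ((2 * l) • a)) (l ^ 2 • a - (y - k ^ 2 • a))
    have t2 := nsm k ((2 * l) • a)
    have t3 := mul_le_mul_of_nonneg_left l1.le (abs_nonneg (k : ℝ))
    dsimp only at l2
    linarith

/-- arc lemma -/
theorem arc (ρ : ℝ) (h0 : 0 < ρ) (h4 : ρ < 1 / 4) (ε : ℝ) (hε : 0 ≤ ε) (hε8 : ε ≤ 1 / 8)
    (c : UnitAddCircle) (h : ∀ y : UnitAddCircle, ‖y‖ < ρ → ‖y + c‖ ≤ ρ + ε) : ‖c‖ ≤ ε := by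
  have key : ∀ s : ℝ, 0 ≤ s → s ≤ 1 / 2 →
      (∀ y : UnitAddCircle, ‖y‖ < ρ → ‖y + (s : UnitAddCircle)‖ ≤ ρ + ε) → s ≤ ε := by
    intro s hs0 hs1 hs
    by_contra hc
    push Not at hc
    have hn : ∀ z : ℝ, |z| ≤ 1 / 2 → ‖(z : UnitAddCircle)‖ = |z| := by
      intro z hz
      exact (AddCircle.norm_coe_eq_abs_iff (p := (1 : ℝ)) one_ne_zero).2 (by simpa using hz)
    have a1 : s ≤ ρ + ε := by
      have := hs 0 (by simpa using h0)
      rw [zero_add, hn s (by rw [abs_of_nonneg hs0]; exact hs1), abs_of_nonneg hs0] at this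
      exact this
    obtain ⟨t, ht0, ht1, ht2⟩ : ∃ t : ℝ, 0 < t ∧ t ≤ ρ ∧ t ≤ (s - ε) / 2 :=
      ⟨min ρ ((s - ε) / 2), lt_min h0 (by linarith), min_le_left _ _, min_le_right _ _⟩
    have b := hs ((ρ - t : ℝ) : UnitAddCircle) (by
      refine (ncoe _).trans_lt ?_
      rw [abs_of_nonneg (by linarith)]; linarith)
    rw [← AddCircle.coe_add] at b
    by_cases hh : ρ - t + s ≤ 1 / 2
    · rw [hn _ (by rw [abs_of_nonneg (by linarith)]; exact hh), abs_of_nonneg (by linarith)] at b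
      linarith
    · push Not at hh
      have e : ((ρ - t + s : ℝ) : UnitAddCircle) = ((ρ - t + s - 1 : ℝ) : UnitAddCircle) := by
        rw [AddCircle.coe_sub, AddCircle.coe_period, sub_zero]
      have g : |ρ - t + s - 1| = 1 - (ρ - t + s) := by
        rw [abs_of_nonpos (by linarith)]; ring
      rw [e, hn _ (by rw [g]; linarith), g] at b
      linarith
  obtain ⟨r, hr⟩ : ∃ r : ℝ, (r : UnitAddCircle) = c := QuotientAddGroup.mk_surjective c
  set s := r - round r with hsdef
  have hs : (s : UnitAddCircle) = c := by
    rw [hsdef, AddCircle.coe_sub, hr]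
    have : ((round r : ℝ) : UnitAddCircle) = 0 := by
      rw [AddCircle.coe_eq_zero_iff]
      exact ⟨round r, by simp⟩
    rw [this, sub_zero]
  have hs2 : |s| ≤ 1 / 2 := abs_sub_round r
  have hnc : ‖c‖ ≤ |s| := hs ▸ ncoe s
  refine hnc.trans ?_
  rcases le_total 0 s with hp | hp
  · rw [abs_of_nonneg hp] at hs2 ⊢
    exact key s hp hs2 (by rw [hs]; exact h)
  · rw [abs_of_nonpos hp] at hs2 ⊢
    refine key (-s) (by linarith) hs2 (fun y hy => ?_)
    have := h (-y) (by rwa [norm_neg])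
    rw [← norm_neg] at this
    rwa [AddCircle.coe_neg, hs, show y + -c = -(-y + c) by abel]

structure Hyp (a : UnitAddCircle) (ρ : ℝ) (g : ℤ → ℤ) : Prop where
  ha : ∀ k : ℤ, k ≠ 0 → k • a ≠ 0
  r0 : 0 < ρ
  r4 : ρ < 1 / 4
  g1 : ∀ n, g n = 1 ↔ ‖n ^ 2 • a‖ < ρ
  g0 : ∀ n, g n = 0 ↔ ¬ ‖n ^ 2 • a‖ < ρ
  ne : ∀ n : ℤ, 0 < n → ‖n ^ 2 • a‖ ≠ ρ

variable {a : UnitAddCircle} {ρ : ℝ} {g : ℤ → ℤ}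

theorem gap (H : Hyp a ρ g) (N : ℕ) :
    ∃ δ : ℝ, 0 < δ ∧ ∀ n : ℤ, 0 < n → n ≤ N → δ ≤ |‖n ^ 2 • a‖ - ρ| := by
  induction N with
  | zero => exact ⟨1, one_pos, fun n h1 h2 => by norm_num at h2; omega⟩
  | succ N ih =>
    obtain ⟨δ, hδ, h⟩ := ih
    have h0 : 0 < |‖((N : ℤ) + 1) ^ 2 • a‖ - ρ| :=
      abs_pos.2 (sub_ne_zero.2 (H.ne _ (by omega)))
    refine ⟨min δ |‖((N : ℤ) + 1) ^ 2 • a‖ - ρ|, lt_min hδ h0, fun n h1 h2 => ?_⟩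
    by_cases hn : n = N + 1
    · subst hn; exact min_le_right _ _
    · exact (min_le_left _ _).trans (h n h1 (by push_cast at h2; omega))

theorem M1 (H : Hyp a ρ g) (N : ℤ) : ∃ ε : ℝ, 0 < ε ∧ ∀ m : ℤ,
    ‖(2 * m) • a‖ < ε → ‖m ^ 2 • a‖ < ε → mu g m N := by
  obtain ⟨δ, hδ, h⟩ := gap H N.toNat
  obtain ⟨η, hη, hη1, hη2⟩ := small (|(N : ℝ)| + 1) δ hδ
  refine ⟨η, hη, fun m h1 h2 n hn hnN => ?_⟩
  have hd := h n hn (by omega)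
  have hnN' : |(n : ℝ)| ≤ |(N : ℝ)| := by
    rw [abs_of_pos (by exact_mod_cast hn), abs_of_pos (by exact_mod_cast (by omega : 0 < N))]
    exact_mod_cast hnN
  have t0 : ‖(n + m) ^ 2 • a - n ^ 2 • a‖ < δ := by
    have e : (n + m) ^ 2 • a - n ^ 2 • a = n • ((2 * m) • a) + m ^ 2 • a := by
      rw [sq_expand]; abel
    rw [e]
    have t1 := norm_add_le (n • ((2 * m) • a)) (m ^ 2 • a)
    have t2 := nsm n ((2 * m) • a)
    have t3 := mul_le_mul hnN' h1.le (norm_nonneg _) (abs_nonneg _)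
    linarith
  have t1 := (abs_norm_sub_norm_le ((n + m) ^ 2 • a) (n ^ 2 • a)).trans_lt t0
  have key : ‖(n + m) ^ 2 • a‖ < ρ ↔ ‖n ^ 2 • a‖ < ρ := by
    rw [abs_lt] at t1
    rcases le_total 0 (‖n ^ 2 • a‖ - ρ) with hh | hh
    · rw [abs_of_nonneg hh] at hd
      constructor <;> intro <;> linarith
    · rw [abs_of_nonpos hh] at hd
      constructor <;> intro <;> linarith
  by_cases hc : ‖n ^ 2 • a‖ < ρ
  · rw [(H.g1 n).2 hc, (H.g1 _).2 (key.2 hc)]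
  · rw [(H.g0 n).2 hc, (H.g0 _).2 (fun h => hc (key.1 h))]

theorem M2 (H : Hyp a ρ g) (ε : ℝ) (hε : 0 < ε) : ∃ N : ℤ, 0 < N ∧ ∀ m : ℤ,
    mu g m N → ‖(2 * m) • a‖ < ε ∧ ‖m ^ 2 • a‖ < ε := by
  by_contra hcon
  push Not at hcon
  have hc : ∀ N : ℕ, ∃ m : ℤ, mu g m (N + 1) ∧ (‖(2 * m) • a‖ < ε → ε ≤ ‖m ^ 2 • a‖) :=
    fun N => hcon (N + 1) (by omega)
  choose m m1 m2 using hc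
  let F : Ultrafilter ℕ := Filter.hyperfilter ℕ
  have hF : (F : Filter ℕ) ≤ atTop := Nat.hyperfilter_le_atTop
  obtain ⟨b, -, hb⟩ := isCompact_univ.ultrafilter_le_nhds (F.map (fun n => (2 * m n) • a))
    (by simp)
  obtain ⟨c, -, hc⟩ := isCompact_univ.ultrafilter_le_nhds (F.map (fun n => m n ^ 2 • a))
    (by simp)
  have hb' : Tendsto (fun n => (2 * m n) • a) F (𝓝 b) := hb
  have hc' : Tendsto (fun n => m n ^ 2 • a) F (𝓝 c) := hc
  have h1 : ∀ n : ℤ, 0 < n → ‖n ^ 2 • a‖ < ρ → ‖n ^ 2 • a + n • b + c‖ ≤ ρ := by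
    intro n hn hr
    have ht : Tendsto (fun N => ‖n ^ 2 • a + n • ((2 * m N) • a) + m N ^ 2 • a‖) F
        (𝓝 ‖n ^ 2 • a + n • b + c‖) :=
      ((tendsto_const_nhds.add (hb'.const_smul n)).add hc').norm
    refine le_of_tendsto ht (hF (Filter.eventually_atTop.2 ⟨n.toNat, fun N hN => ?_⟩))
    have := m1 N n hn (by omega)
    rw [(H.g1 n).2 hr, H.g1, sq_expand] at this
    exact this.le
  have h2 : ∀ n0 : ℤ, 0 ≤ n0 → n0 • b + c = 0 := by
    intro n0 hn0
    rw [← norm_le_zero_iff]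
    refine arc ρ H.r0 H.r4 0 le_rfl (by norm_num) _ (fun y hy => ?_)
    rw [add_zero]
    refine le_of_forall_pos_le_add (fun δ hδ => ?_)
    obtain ⟨η, hη, hη1, hη2⟩ := small (|(n0 : ℝ)| + 2) (min δ (ρ - ‖y‖))
      (lt_min hδ (by linarith))
    have hη3 := hη2.trans_le (min_le_left _ _)
    have hη4 := hη2.trans_le (min_le_right _ _)
    obtain ⟨k, hk, k1, k2, k3⟩ := W_all a b H.ha (y - n0 ^ 2 • a) η hη
    dsimp only at k2 k3
    have t2 := nsm n0 ((2 * k) • a)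
    have t3 := mul_le_mul_of_nonneg_left k1.le (abs_nonneg (n0 : ℝ))
    have t4 : ‖(n0 + k) ^ 2 • a - y‖ < (|(n0 : ℝ)| + 1) * η := by
      have e : (n0 + k) ^ 2 • a - y = n0 • ((2 * k) • a) + (k ^ 2 • a - (y - n0 ^ 2 • a)) := by
        rw [sq_expand]; abel
      rw [e]
      have := norm_add_le (n0 • ((2 * k) • a)) (k ^ 2 • a - (y - n0 ^ 2 • a))
      linarith
    have t5 : ‖(n0 + k) ^ 2 • a‖ < ρ := by
      have := norm_add_le ((n0 + k) ^ 2 • a - y) y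
      rw [sub_add_cancel] at this
      linarith
    have t6 := h1 (n0 + k) (by omega) t5
    have e : y + (n0 • b + c) = ((n0 + k) ^ 2 • a + (n0 + k) • b + c)
        + (-((n0 + k) ^ 2 • a - y)) + (-(k • b - 0)) := by
      rw [add_smul n0 k b]; abel
    rw [e]
    refine norm_add₃_le.trans ?_
    rw [norm_neg, norm_neg]
    linarith
  have hc0 : c = 0 := by simpa using h2 0 le_rfl
  have hb0 : b = 0 := by simpa [hc0] using h2 1 zero_le_one
  subst hc0 hb0
  have e1 := (Metric.tendsto_nhds.1 hb') ε hε
  have e2 := (Metric.tendsto_nhds.1 hc') ε hε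
  obtain ⟨n, n1, n2⟩ := (e1.and e2).exists
  rw [dist_zero_right] at n1 n2
  exact absurd n2 (not_lt.2 (m2 n n1))

theorem L1 (H : Hyp a ρ g) (N : ℤ) : ∃ ε : ℝ, 0 < ε ∧ ∀ m : ℤ, 0 < m →
    ‖(2 * m) • a‖ < ε → lam g m N := by
  obtain ⟨ε, hε, h⟩ := M1 H N
  obtain ⟨K, hK⟩ := exists_nat_gt (2 / ε)
  obtain ⟨ε', hε', h'⟩ := large a H.ha K
  refine ⟨min ε' (ε / 4), lt_min hε' (by linarith), fun m hm hs => ?_⟩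
  have hKm := h' m hm (hs.trans_le (min_le_left _ _))
  have hs2 := hs.trans_le (min_le_right _ _)
  have hm' : (0 : ℝ) < m := by exact_mod_cast hm
  have hKm' : 2 / ε < m := hK.trans (by exact_mod_cast hKm)
  obtain ⟨r, hr⟩ : ∃ r : ℝ, (r : UnitAddCircle) = m ^ 2 • a := QuotientAddGroup.mk_surjective _
  set s := r - round r with hsdef
  have hs' : (s : UnitAddCircle) = m ^ 2 • a := by
    rw [hsdef, AddCircle.coe_sub, hr]
    have : ((round r : ℝ) : UnitAddCircle) = 0 := by
      rw [AddCircle.coe_eq_zero_iff]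
      exact ⟨round r, by simp⟩
    rw [this, sub_zero]
  have habs : |s| ≤ 1 / 2 := abs_sub_round r
  have hth : ‖((-s / m : ℝ) : UnitAddCircle)‖ ≤ ε / 4 := by
    refine (ncoe _).trans ?_
    rw [abs_div, abs_neg, abs_of_pos hm', div_le_iff₀ hm']
    rw [div_lt_iff₀ hε] at hKm'
    linarith
  have hmth : m • ((-s / m : ℝ) : UnitAddCircle) = - (m ^ 2 • a) := by
    rw [← AddCircle.coe_zsmul, zsmul_eq_mul, mul_div_cancel₀ _ hm'.ne', AddCircle.coe_neg, hs']
  obtain ⟨η, hη, hη1, hη2⟩ := small (|(m : ℝ)| + 1) (ε / 4) (by linarith)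
  obtain ⟨n, hn, n1, n2⟩ := dens a H.ha ((-s / m : ℝ) : UnitAddCircle) 0 η hη
  rw [sub_zero] at n2
  have n3 : ‖(2 * n) • a‖ < ε / 2 + ε / 8 := by
    have := norm_add_le ((2 * n) • a - ((-s / m : ℝ) : UnitAddCircle)) ((-s / m : ℝ))
    rw [sub_add_cancel] at this
    by_contra hcon
    push Not at hcon
    linarith
  refine ⟨n, hn, h n (by linarith) (by linarith), h _ ?_ ?_⟩
  · have := norm_add_le ((2 * n) • a) ((2 * m) • a)
    rw [← add_smul, ← mul_add] at this
    linarith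
  · have e : (n + m) ^ 2 • a = m • ((2 * n) • a - ((-s / m : ℝ) : UnitAddCircle)) + n ^ 2 • a := by
      rw [add_comm n m, sq_expand, smul_sub, hmth]; abel
    rw [e]
    have t1 := norm_add_le (m • ((2 * n) • a - ((-s / m : ℝ) : UnitAddCircle))) (n ^ 2 • a)
    have t2 := nsm m ((2 * n) • a - ((-s / m : ℝ) : UnitAddCircle))
    have t3 := mul_le_mul_of_nonneg_left n1.le (abs_nonneg (m : ℝ))
    linarith

theorem L2 (H : Hyp a ρ g) (ε : ℝ) (hε : 0 < ε) : ∃ N : ℤ, 0 < N ∧ ∀ m : ℤ,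
    lam g m N → ‖(2 * m) • a‖ < ε := by
  obtain ⟨N, hN, h⟩ := M2 H (ε / 2) (by linarith)
  refine ⟨N, hN, fun m ⟨n, _, h1, h2⟩ => ?_⟩
  have t1 := (h _ h1).1
  have t2 := (h _ h2).1
  have := norm_sub_le ((2 * (n + m)) • a) ((2 * n) • a)
  rw [← sub_smul] at this
  rw [show 2 * m = 2 * (n + m) - 2 * n by ring]
  linarith

theorem K1 (H : Hyp a ρ g) (N : ℤ) : ∃ ε : ℝ, 0 < ε ∧ ∀ m : ℤ, 0 < m →
    ‖m ^ 2 • a‖ < ε → kap g m N := by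
  obtain ⟨ε, hε, h⟩ := M1 H N
  refine ⟨ε / 2, by linarith, fun m hm hs => ?_⟩
  obtain ⟨η, hη, hη1, hη2⟩ := small |(m : ℝ)| (ε / 4) (by linarith)
  obtain ⟨M, hM, hM2⟩ := L2 H η hη
  refine ⟨M, hM, fun h' hh' hgh hl L hL => ?_⟩
  have hl2 := hM2 _ hl
  obtain ⟨ε2, hε2, hL2⟩ := L1 H L
  have hgh' := (H.g1 _).1 hgh
  obtain ⟨ζ, hζ, hζ1, hζ2⟩ := small (|((h' + m : ℤ) : ℝ)| + 1)
    (min (min ε2 (ε / 4)) (ρ - ‖h' ^ 2 • a‖)) (lt_min (lt_min hε2 (by linarith)) (by linarith))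
  have z1 := hζ1.trans ((min_le_left _ _).trans (min_le_left _ _))
  have z2 := hζ1.trans ((min_le_left _ _).trans (min_le_right _ _))
  have z3 := hζ2.trans_le (min_le_right _ _)
  obtain ⟨n, hn, n1, n2⟩ := dens a H.ha 0 (-(m ^ 2 • a) - m • ((2 * h') • a)) ζ hζ
  rw [sub_zero] at n1
  have t1 := nsm m ((2 * h') • a)
  have t1' := mul_le_mul_of_nonneg_left hl2.le (abs_nonneg (m : ℝ))
  refine ⟨n, hn, hL2 n hn (n1.trans_le z1), h n (by linarith) ?_, (H.g1 _).2 ?_⟩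
  · have e : n ^ 2 • a = (n ^ 2 • a - (-(m ^ 2 • a) - m • ((2 * h') • a)))
        + (-(m ^ 2 • a)) + (-(m • ((2 * h') • a))) := by abel
    rw [e]
    refine norm_add₃_le.trans_lt ?_
    rw [norm_neg, norm_neg]
    linarith
  · have e : (h' + m + n) ^ 2 • a = h' ^ 2 • a + (h' + m) • ((2 * n) • a)
        + (n ^ 2 • a - (-(m ^ 2 • a) - m • ((2 * h') • a))) := by
      rw [sq_expand, add_comm h' m, sq_expand a m h']; abel
    rw [e]
    refine norm_add₃_le.trans_lt ?_
    have t2 := nsm (h' + m) ((2 * n) • a)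
    have t3 := mul_le_mul_of_nonneg_left n1.le (abs_nonneg ((h' + m : ℤ) : ℝ))
    linarith

theorem K2 (H : Hyp a ρ g) (ε : ℝ) (hε : 0 < ε) : ∃ N : ℤ, 0 < N ∧ ∀ m : ℤ, 
    kap g m N → ‖m ^ 2 • a‖ < ε := by
  obtain ⟨e', he', he1, he2⟩ : ∃ e' : ℝ, 0 < e' ∧ e' < ε ∧ e' ≤ 1 / 8 :=
    ⟨min (ε / 2) (1 / 8), by positivity, (min_le_left _ _).trans_lt (by linarith), min_le_right _ _⟩
  obtain ⟨N, hN, h⟩ := M2 H e' he'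
  refine ⟨N, hN, fun m ⟨M, hM, hk⟩ => lt_of_le_of_lt ?_ he1⟩
  refine arc ρ H.r0 H.r4 e' he'.le he2 _ (fun y hy => ?_)
  refine le_of_forall_pos_le_add (fun δ hδ => ?_)
  obtain ⟨ε2, hε2, hM2⟩ := L1 H M
  obtain ⟨η, hη, hη1, hη2⟩ := small (|(m : ℝ)| + 1) (min (min ε2 (δ / 2)) (ρ - ‖y‖))
    (lt_min (lt_min hε2 (by linarith)) (by linarith))
  have z1 := hη1.trans ((min_le_left _ _).trans (min_le_left _ _))
  have z2 := hη2.trans_le ((min_le_left _ _).trans (min_le_right _ _))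
  have z3 := hη1.trans (min_le_right _ _)
  obtain ⟨h', hh', p1, p2⟩ := dens a H.ha 0 y η hη
  rw [sub_zero] at p1
  have p3 : ‖h' ^ 2 • a‖ < ρ := by
    have := norm_add_le (h' ^ 2 • a - y) y
    rw [sub_add_cancel] at this
    linarith
  obtain ⟨ζ, hζ, hζ1, hζ2⟩ := small |((h' + m : ℤ) : ℝ)| (δ / 2) (by linarith)
  obtain ⟨L, hL, hL2⟩ := L2 H ζ hζ
  obtain ⟨n, hn, n1, n2, n3⟩ := hk h' hh' ((H.g1 _).2 p3) (hM2 _ hh' (p1.trans_le z1)) L hL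
  have q1 := hL2 _ n1
  have q2 := (h n n2).2
  have q3 := (H.g1 _).1 n3
  have e : y + m ^ 2 • a = (h' + m + n) ^ 2 • a + (-(h' ^ 2 • a - y)) + (-(m • ((2 * h') • a)))
      + (-((h' + m) • ((2 * n) • a))) + (-(n ^ 2 • a)) := by
    rw [sq_expand, add_comm h' m, sq_expand a m h']; abel
  rw [e]
  have s1 := norm_add_le ((h' + m + n) ^ 2 • a + (-(h' ^ 2 • a - y)) + (-(m • ((2 * h') • a)))
      + (-((h' + m) • ((2 * n) • a)))) (-(n ^ 2 • a))
  have s2 := norm_add_le ((h' + m + n) ^ 2 • a + (-(h' ^ 2 • a - y)) + (-(m • ((2 * h') • a))))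
      (-((h' + m) • ((2 * n) • a)))
  have s3 := norm_add₃_le (a := (h' + m + n) ^ 2 • a) (b := -(h' ^ 2 • a - y))
    (c := -(m • ((2 * h') • a)))
  rw [norm_neg] at s1 s2
  rw [norm_neg, norm_neg] at s3
  have t2 := nsm (h' + m) ((2 * n) • a)
  have t3 := mul_le_mul_of_nonneg_left q1.le (abs_nonneg ((h' + m : ℤ) : ℝ))
  have t4 := nsm m ((2 * h') • a)
  have t5 := mul_le_mul_of_nonneg_left p1.le (abs_nonneg (m : ℝ))
  linarith

theorem V1 (H : Hyp a ρ g) (N : ℤ) : ∃ ε : ℝ, 0 < ε ∧ ∀ m mt : ℤ, 0 < mt →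
    ‖m ^ 2 • a - mt ^ 2 • a‖ < ε → nu g m mt N := by
  obtain ⟨ε, hε, h⟩ := K1 H N
  refine ⟨ε / 2, by linarith, fun m mt hmt hs => ?_⟩
  obtain ⟨η, hη, hη1, hη2⟩ := small (|((mt - m : ℤ) : ℝ)| + 1) (ε / 2) (by linarith)
  obtain ⟨L, hL, hL2⟩ := L2 H η hη
  obtain ⟨L', hL', hL2'⟩ := K2 H η hη
  have kmono : ∀ k N N' : ℤ, N ≤ N' → kap g k N' → kap g k N := by
    rintro k N N' hN ⟨M, hM, hk⟩
    refine ⟨M, hM, fun x x1 x2 x3 L hL => ?_⟩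
    obtain ⟨n, n1, n2, n3, n4⟩ := hk x x1 x2 x3 L hL
    exact ⟨n, n1, n2, fun i i1 i2 => n3 i i1 (i2.trans hN), n4⟩
  have lmono : ∀ k N N' : ℤ, N ≤ N' → lam g k N' → lam g k N := by
    rintro k N N' hN ⟨n, hn, h1, h2⟩
    exact ⟨n, hn, fun i i1 i2 => h1 i i1 (i2.trans hN), fun i i1 i2 => h2 i i1 (i2.trans hN)⟩
  refine ⟨max L L', lt_max_of_lt_left hL, fun n hn h1 h2 => h _ (by omega) ?_⟩
  have q1 := hL2 _ (lmono _ _ _ (le_max_left _ _) h1)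
  have q2 := hL2' _ (kmono _ _ _ (le_max_right _ _) h2)
  have e : (mt + n) ^ 2 • a = (mt - m) • ((2 * n) • a) + (m + n) ^ 2 • a
      + (-(m ^ 2 • a - mt ^ 2 • a)) := by
    rw [sq_expand, sq_expand, sub_smul]; abel
  rw [e]
  refine norm_add₃_le.trans_lt ?_
  rw [norm_neg]
  have t2 := nsm (mt - m) ((2 * n) • a)
  have t3 := mul_le_mul_of_nonneg_left q1.le (abs_nonneg ((mt - m : ℤ) : ℝ))
  linarith

theorem V2 (H : Hyp a ρ g) (ε : ℝ) (hε : 0 < ε) : ∃ N : ℤ, 0 < N ∧ ∀ m mt : ℤ, 0 < m →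
    nu g m mt N → ‖m ^ 2 • a - mt ^ 2 • a‖ < ε := by
  obtain ⟨N, hN, h⟩ := K2 H (ε / 2) (by linarith)
  refine ⟨N, hN, fun m mt hm ⟨L, hL, hk⟩ => ?_⟩
  obtain ⟨ε1, hε1, hL1⟩ := L1 H L
  obtain ⟨ε2, hε2, hK1⟩ := K1 H L
  obtain ⟨η, hη, hη1, hη2⟩ := small (|(m : ℝ)| + |(mt : ℝ)| + 1) (min (min ε1 ε2) (ε / 2))
    (lt_min (lt_min hε1 hε2) (by linarith))
  have z1 := hη1.trans ((min_le_left _ _).trans (min_le_left _ _))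
  have z2 := hη2.trans_le ((min_le_left _ _).trans (min_le_right _ _))
  have z3 := hη2.trans_le (min_le_right _ _)
  obtain ⟨n, hn, n1, n2⟩ := dens a H.ha 0 (-(m ^ 2 • a)) η hη
  rw [sub_zero] at n1
  have t1 := nsm m ((2 * n) • a)
  have t2 := mul_le_mul_of_nonneg_left n1.le (abs_nonneg (m : ℝ))
  have t3 := nsm mt ((2 * n) • a)
  have t4 := mul_le_mul_of_nonneg_left n1.le (abs_nonneg (mt : ℝ))
  have t5 := mul_nonneg (abs_nonneg (mt : ℝ)) hη.le
  have t6 := mul_nonneg (abs_nonneg (m : ℝ)) hη.le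
  have q := hk n hn (hL1 n hn (n1.trans_le z1)) (hK1 _ (by omega) (by
    have e : (m + n) ^ 2 • a = m • ((2 * n) • a) + (n ^ 2 • a - -(m ^ 2 • a)) := by
      rw [sq_expand]; abel
    rw [e]
    refine (norm_add_le _ _).trans_lt ?_
    linarith))
  have q1 := h _ q
  have e : m ^ 2 • a - mt ^ 2 • a = mt • ((2 * n) • a) + (n ^ 2 • a - -(m ^ 2 • a))
      + (-((mt + n) ^ 2 • a)) := by
    rw [sq_expand]; abel
  rw [e]
  refine norm_add₃_le.trans_lt ?_
  rw [norm_neg]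
  linarith

theorem kmono {k N N' : ℤ} (hN : N ≤ N') (h : kap g k N') : kap g k N := by
  obtain ⟨M, hM, hk⟩ := h
  refine ⟨M, hM, fun x x1 x2 x3 L hL => ?_⟩
  obtain ⟨n, n1, n2, n3, n4⟩ := hk x x1 x2 x3 L hL
  exact ⟨n, n1, n2, fun i i1 i2 => n3 i i1 (i2.trans hN), n4⟩

theorem main (H : Hyp a ρ g) (m mt : ℤ) (hm : 0 < m) (hmt : 0 < mt) :
    del g m mt ↔ m ∣ mt := by
  have ex : ∀ k n : ℤ, (k + n) ^ 2 • a - k ^ 2 • a = k • ((2 * n) • a) + n ^ 2 • a := by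
    intro k n; rw [sq_expand]; abel
  constructor
  · intro hd
    by_contra hnd
    have hm' : (m : ℝ) ≠ 0 := by exact_mod_cast hm.ne'
    set x : UnitAddCircle := ((1 / m : ℝ) : UnitAddCircle) with hx
    have hmx : m • x = 0 := by
      rw [hx, ← AddCircle.coe_zsmul, zsmul_eq_mul, mul_one_div, div_self hm',
        AddCircle.coe_period]
    have hmtx : 0 < ‖mt • x‖ := by
      rw [norm_pos_iff]
      intro h0
      rw [hx, ← AddCircle.coe_zsmul, zsmul_eq_mul, AddCircle.coe_eq_zero_iff] at h0
      obtain ⟨j, hj⟩ := h0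
      apply hnd
      refine ⟨j, ?_⟩
      rw [zsmul_eq_mul, mul_one, mul_one_div, eq_div_iff hm'] at hj
      have : j * m = mt := by exact_mod_cast hj
      rw [← this, mul_comm]
    obtain ⟨N, hN, hV⟩ := V2 H (‖mt • x‖ / 2) (by linarith)
    obtain ⟨L, hL, hn⟩ := hd N hN
    obtain ⟨ε1, hε1, hV1⟩ := V1 H L
    obtain ⟨ε2, hε2, hK1⟩ := K1 H L
    obtain ⟨η, hη, hη1, hη2⟩ := small (|(m : ℝ)| + |(mt : ℝ)| + 1)
      (min (min ε1 ε2) (‖mt • x‖ / 2)) (lt_min (lt_min hε1 hε2) (by linarith))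
    have z1 := hη2.trans_le ((min_le_left _ _).trans (min_le_left _ _))
    have z2 := hη1.trans ((min_le_left _ _).trans (min_le_right _ _))
    have z3 := hη2.trans_le (min_le_right _ _)
    obtain ⟨n, hn0, n1, n2⟩ := dens a H.ha x 0 η hη
    rw [sub_zero] at n2
    have t1 := nsm m ((2 * n) • a - x)
    have t2 := mul_le_mul_of_nonneg_left n1.le (abs_nonneg (m : ℝ))
    have t3 := nsm mt ((2 * n) • a - x)
    have t4 := mul_le_mul_of_nonneg_left n1.le (abs_nonneg (mt : ℝ))
    have t5 := mul_nonneg (abs_nonneg (mt : ℝ)) hη.le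
    have t6 := mul_nonneg (abs_nonneg (m : ℝ)) hη.le
    have q := hn n hn0 (hV1 _ _ hm (by
      have e : (m + n) ^ 2 • a - m ^ 2 • a = m • ((2 * n) • a - x) + n ^ 2 • a := by
        rw [ex, smul_sub, hmx, sub_zero]
      rw [e]
      refine (norm_add_le _ _).trans_lt ?_
      linarith)) (hK1 n hn0 (by linarith))
    have q1 := hV _ _ (by omega) q
    have e : mt • x = ((mt + n) ^ 2 • a - mt ^ 2 • a) + (-(mt • ((2 * n) • a - x)))
        + (-(n ^ 2 • a)) := by
      rw [ex, smul_sub]; abel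
    have s := norm_add₃_le (a := (mt + n) ^ 2 • a - mt ^ 2 • a)
      (b := -(mt • ((2 * n) • a - x))) (c := -(n ^ 2 • a))
    rw [← e, norm_neg, norm_neg] at s
    linarith
  · rintro ⟨c, rfl⟩ N hN
    obtain ⟨ε, hε, hV1⟩ := V1 H N
    obtain ⟨η, hη, hη1, hη2⟩ := small (2 * |(c : ℝ)| + 1) ε hε
    obtain ⟨L, hL, hV2⟩ := V2 H η hη
    obtain ⟨L', hL', hK2⟩ := K2 H η hη
    refine ⟨max L L', lt_max_of_lt_left hL, fun n hn h1 h2 => hV1 _ _ hmt ?_⟩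
    have h1' : nu g (m + n) m L := by
      obtain ⟨R, hR, hr⟩ := h1
      exact ⟨R, hR, fun i i1 i2 i3 => kmono (le_max_left _ _) (hr i i1 i2 i3)⟩
    have q1 := hV2 _ _ (by omega) h1'
    have q2 := hK2 _ (kmono (le_max_right _ _) h2)
    have e : (m * c + n) ^ 2 • a - (m * c) ^ 2 • a
        = c • (((m + n) ^ 2 • a - m ^ 2 • a) - n ^ 2 • a) + n ^ 2 • a := by
      rw [ex, ex, add_sub_cancel_right, smul_smul c m, mul_comm c m]
    rw [e]
    refine (norm_add_le _ _).trans_lt ?_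
    have s1 := nsm c (((m + n) ^ 2 • a - m ^ 2 • a) - n ^ 2 • a)
    have s2 := norm_sub_le ((m + n) ^ 2 • a - m ^ 2 • a) (n ^ 2 • a)
    have s3 := mul_le_mul_of_nonneg_left (s2.trans (add_le_add q1.le q2.le))
      (abs_nonneg (c : ℝ))
    linarith

open scoped Classical in
theorem statement (α ρ : ℝ) (hρ0 : 0 < ρ) (hρ4 : ρ < 1 / 4)
    (hα : ¬ ∃ q r : ℚ, α = (q : ℝ) + (r : ℝ) * ρ)
    (g : ℤ → ℤ)
    (hg : ∀ n : ℤ, g n = if |α * n ^ 2 - round (α * n ^ 2)| < ρ then 1 else 0) :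
    ∀ m mt : ℤ, 0 < m → 0 < mt → (del g m mt ↔ m ∣ mt) := by
  have hno : ∀ k : ℤ, ‖k ^ 2 • (α : UnitAddCircle)‖ = |α * k ^ 2 - round (α * k ^ 2)| := by
    intro k
    rw [← AddCircle.coe_zsmul, UnitAddCircle.norm_eq, zsmul_eq_mul]
    push_cast
    rw [mul_comm]
  have H : Hyp (α : UnitAddCircle) ρ g := by
    refine ⟨fun k hk h0 => ?_, hρ0, hρ4, fun n => ?_, fun n => ?_, fun n hn h0 => ?_⟩
    · rw [← AddCircle.coe_zsmul, zsmul_eq_mul, AddCircle.coe_eq_zero_iff] at h0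
      obtain ⟨j, hj⟩ := h0
      rw [zsmul_eq_mul, mul_one] at hj
      have hk' : (k : ℝ) ≠ 0 := by exact_mod_cast hk
      refine hα ⟨(j : ℚ) / k, 0, ?_⟩
      push_cast
      field_simp
      linarith
    · rw [hno, hg]; split_ifs with h <;> simp [h]
    · rw [hno, hg]; split_ifs with h <;> simp [h]
    · rw [hno] at h0
      have hn' : (n : ℝ) ≠ 0 := by exact_mod_cast hn.ne'
      set R := round (α * n ^ 2) with hR
      rcases abs_eq hρ0.le |>.1 h0 with h | h
      · refine hα ⟨(R : ℚ) / n ^ 2, 1 / n ^ 2, ?_⟩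
        push_cast
        field_simp
        linarith
      · refine hα ⟨(R : ℚ) / n ^ 2, -1 / n ^ 2, ?_⟩
        push_cast
        field_simp
        linarith
  intro m mt hm hmt
  exact main H m mt hm hmt

end Stmt18
end
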